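/- arXiv:math/9501221 — 2 statements merged into one kernel-verified Lean document; each statement's English description precedes it below -/
import Mathlib

section
/- For every constant ε > 0 there exist a sequence p̄ = (p(1), p(2), …) with 0 ≤ p(i) < 1 for all i, and a first-order sentence ψ of the language L, such that −log(∏_{i=1}^n (1 − p(i))) / log n < ε for all sufficiently large n, yet liminf_{n→∞} Prob(n,p̄;ψ) = 0 while limsup_{n→∞} Prob(n,p̄;ψ) = 1. -/
open FirstOrder Filter

namespace RandomGraph

/-- The set of potential edges of a graph on `Fin n` (pairs `(v,w)` with `v < w`).
Vertex `v : Fin n` represents the number `v + 1` of the interval `[n] = {1, …, n}`. -/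
abbrev EdgeIdx (n : ℕ) := {e : Fin n × Fin n // e.1 < e.2}

/-- An outcome of the random graph on `[n]`: a choice of which potential edges are present. -/
abbrev Sample (n : ℕ) := EdgeIdx n → Bool

/-- Adjacency of two vertices (described by their values in `Fin n`) in the outcome `ω`. -/
def adjVal {n : ℕ} (ω : Sample n) (a b : ℕ) : Prop :=
  ∃ e : EdgeIdx n, ω e = true ∧
    ((e.1.1.val = a ∧ e.1.2.val = b) ∨ (e.1.1.val = b ∧ e.1.2.val = a))

/-- Adjacency of two vertices in the outcome `ω`. -/
def sampleAdj {n : ℕ} (ω : Sample n) (v w : Fin n) : Prop := adjVal ω v.val w.val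

/-- The probability of the outcome `ω` in the model `G(n, p̄)`: each pair of distinct
vertices at distance `d` is an edge with probability `p d`, independently.  (The value `p 0` is
never used, since distinct vertices are at distance at least 1.) -/
noncomputable def sampleWeight (p : ℕ → ℝ) {n : ℕ} (ω : Sample n) : ℝ :=
  ∏ e : EdgeIdx n,
    (if ω e then p (e.1.2.val - e.1.1.val) else 1 - p (e.1.2.val - e.1.1.val))

/-- The probability of the outcome `ω` in the circular model `C(n, p̄)`: vertices `v, w` are
adjacent with probability `p (min |v-w| (n - |v-w|))`, independently. -/
noncomputable def cWeight (p : ℕ → ℝ) {n : ℕ} (ω : Sample n) : ℝ :=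
  ∏ e : EdgeIdx n,
    (if ω e then p (min (e.1.2.val - e.1.1.val) (n - (e.1.2.val - e.1.1.val)))
      else 1 - p (min (e.1.2.val - e.1.1.val) (n - (e.1.2.val - e.1.1.val))))

open scoped Classical in
/-- The probability of the event `P` in the random graph `G(n, p̄)`. -/
noncomputable def Pr (p : ℕ → ℝ) (n : ℕ) (P : Sample n → Prop) : ℝ :=
  ∑ ω : Sample n, if P ω then sampleWeight p ω else 0

open scoped Classical in
/-- The probability of the event `P` in the circular random graph `C(n, p̄)`. -/
noncomputable def cPr (p : ℕ → ℝ) (n : ℕ) (P : Sample n → Prop) : ℝ :=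
  ∑ ω : Sample n, if P ω then cWeight p ω else 0

/-! ### The language `L` of graphs (also used as the language `L^c`) -/

/-- An outcome `ω` of the random graph, viewed as a structure of `FirstOrder.Language.graph`,
the language with a single binary adjacency predicate. -/
def graphStructure {n : ℕ} (ω : Sample n) : Language.graph.Structure (Fin n) where
  RelMap | .adj => fun x => sampleAdj ω (x 0) (x 1)

/-- Satisfaction of a sentence of the language `L` in the outcome `ω`. -/
def SatL {n : ℕ} (ω : Sample n) (ψ : Language.graph.Sentence) : Prop :=
  @Language.Sentence.Realize _ _ (graphStructure ω) ψ

/-- `Prob(n, p̄; ψ)` for a sentence `ψ` of the language `L`. -/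
noncomputable def ProbL (p : ℕ → ℝ) (n : ℕ) (ψ : Language.graph.Sentence) : ℝ :=
  Pr p n fun ω => SatL ω ψ

/-- The probability that `C(n, p̄)` satisfies a sentence `ψ` of the language `L^c = L`. -/
noncomputable def cProbL (p : ℕ → ℝ) (n : ℕ) (ψ : Language.graph.Sentence) : ℝ :=
  cPr p n fun ω => SatL ω ψ

/-! ### The language `L₊` -/

/-- The constants of the language `L₊`: the first element `1` and the last element `n`. -/
inductive plusFunc : ℕ → Type
  | one : plusFunc 0
  | last : plusFunc 0

/-- The relations of `L₊`: adjacency and successor. -/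
inductive plusRel : ℕ → Type
  | adj : plusRel 2
  | succ : plusRel 2

/-- The language `L₊` with adjacency, successor (`x = y + 1`), and constants `1` and `n`. -/
def Lplus : Language := ⟨plusFunc, plusRel⟩

/-- An outcome `ω` of the random graph on `[m+1]`, as an `L₊`-structure. -/
def plusStructure {m : ℕ} (ω : Sample (m + 1)) : Lplus.Structure (Fin (m + 1)) where
  funMap | .one => fun _ => 0 | .last => fun _ => Fin.last m
  RelMap
    | .adj => fun x => sampleAdj ω (x 0) (x 1)
    | .succ => fun x => (x 0).val = (x 1).val + 1

/-- `Prob(n, p̄; ψ)` for a sentence `ψ` of `L₊` (set to `0` in the irrelevant case `n = 0`,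
where the constants cannot be interpreted). -/
noncomputable def ProbPlus (p : ℕ → ℝ) : ℕ → Lplus.Sentence → ℝ
  | 0, _ => 0
  | (m + 1), ψ => Pr p (m + 1) fun ω => @Language.Sentence.Realize _ _ (plusStructure ω) ψ

/-! ### The language `L≤` -/

/-- The relations of `L≤`: adjacency and linear order. -/
inductive leRel : ℕ → Type
  | adj : leRel 2
  | le : leRel 2

/-- The language `L≤` with adjacency and a linear order. -/
def Lle : Language := ⟨fun _ => Empty, leRel⟩

/-- An outcome `ω` of the random graph on `[n]`, as an `L≤`-structure. -/
def leStructure {n : ℕ} (ω : Sample n) : Lle.Structure (Fin n) where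
  funMap := fun f _ => Empty.elim f
  RelMap
    | .adj => fun x => sampleAdj ω (x 0) (x 1)
    | .le => fun x => x 0 ≤ x 1

/-- Satisfaction of a sentence of `L≤` in the outcome `ω`. -/
def SatLe {n : ℕ} (ω : Sample n) (ψ : Lle.Sentence) : Prop :=
  @Language.Sentence.Realize _ _ (leStructure ω) ψ

/-- `Prob(n, p̄; ψ)` for a sentence `ψ` of `L≤`. -/
noncomputable def ProbLe (p : ℕ → ℝ) (n : ℕ) (ψ : Lle.Sentence) : ℝ :=
  Pr p n fun ω => SatLe ω ψ

/-! ### The circular languages `L₊^c` and `L≤^c` -/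

/-- The relations of `L₊^c`: adjacency and cyclic successor. -/
inductive plusCRel : ℕ → Type
  | adj : plusCRel 2
  | succ : plusCRel 2

/-- The language `L₊^c`, with adjacency and cyclic successor (`x = y + 1 (mod n)`). -/
def LplusC : Language := ⟨fun _ => Empty, plusCRel⟩

/-- An outcome `ω` of the circular random graph on `[n]`, as an `L₊^c`-structure. -/
def plusCStructure {n : ℕ} (ω : Sample n) : LplusC.Structure (Fin n) where
  funMap := fun f _ => Empty.elim f
  RelMap
    | .adj => fun x => sampleAdj ω (x 0) (x 1)
    | .succ => fun x => (x 0).val = ((x 1).val + 1) % n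

/-- The probability that `C(n, p̄)` satisfies a sentence `ψ` of the language `L₊^c`. -/
noncomputable def cProbPlus (p : ℕ → ℝ) (n : ℕ) (ψ : LplusC.Sentence) : ℝ :=
  cPr p n fun ω => @Language.Sentence.Realize _ _ (plusCStructure ω) ψ

/-- The relations of `L≤^c`: adjacency and the ternary clockwise-order predicate. -/
inductive cycRel : ℕ → Type
  | adj : cycRel 2
  | btw : cycRel 3

/-- The language `L≤^c`, with adjacency and the ternary clockwise-order predicate `C`. -/
def Lcyc : Language := ⟨fun _ => Empty, cycRel⟩

/-- `C(a, b, c)`: `a ≤ b ≤ c` holds after some cyclic permutation of `(a, b, c)`. -/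
def cyclicBtw {n : ℕ} (a b c : Fin n) : Prop :=
  (a ≤ b ∧ b ≤ c) ∨ (b ≤ c ∧ c ≤ a) ∨ (c ≤ a ∧ a ≤ b)

/-- An outcome `ω` of the circular random graph on `[n]`, as an `L≤^c`-structure. -/
def cycStructure {n : ℕ} (ω : Sample n) : Lcyc.Structure (Fin n) where
  funMap := fun f _ => Empty.elim f
  RelMap
    | .adj => fun x => sampleAdj ω (x 0) (x 1)
    | .btw => fun x => cyclicBtw (x 0) (x 1) (x 2)

/-- Satisfaction of a sentence of `L≤^c` in the outcome `ω`. -/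
def SatCyc {n : ℕ} (ω : Sample n) (ψ : Lcyc.Sentence) : Prop :=
  @Language.Sentence.Realize _ _ (cycStructure ω) ψ

/-- The probability that `C(n, p̄)` satisfies a sentence `ψ` of the language `L≤^c`. -/
noncomputable def cProbCyc (p : ℕ → ℝ) (n : ℕ) (ψ : Lcyc.Sentence) : ℝ :=
  cPr p n fun ω => SatCyc ω ψ


section Helpers

open MeasureTheory ProbabilityTheory

/-- The edge distance. -/
def edist' {n : ℕ} (e : EdgeIdx n) : ℕ := e.1.2.val - e.1.1.val

/-- weight of value `b` at edge `e`. -/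
noncomputable def ew (p : ℕ → ℝ) {n : ℕ} (e : EdgeIdx n) (b : Bool) : ℝ :=
  if b then p (edist' e) else 1 - p (edist' e)

/-- single edge measure. -/
noncomputable def nu (p : ℕ → ℝ) {n : ℕ} (e : EdgeIdx n) : Measure Bool :=
  ENNReal.ofReal (ew p e true) • Measure.dirac true +
    ENNReal.ofReal (ew p e false) • Measure.dirac false

/-- product measure. -/
noncomputable def mu (p : ℕ → ℝ) (n : ℕ) : Measure (Sample n) :=
  Measure.pi (fun e => nu p e)

lemma ew_nonneg {p : ℕ → ℝ} (hp : ∀ i, 0 ≤ p i ∧ p i < 1) {n : ℕ} (e : EdgeIdx n) (b : Bool) :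
    0 ≤ ew p e b := by
  have := hp (edist' e)
  unfold ew; split_ifs <;> linarith

lemma nu_prob {p : ℕ → ℝ} (hp : ∀ i, 0 ≤ p i ∧ p i < 1) {n : ℕ} (e : EdgeIdx n) :
    IsProbabilityMeasure (nu p e) := by
  constructor
  simp only [nu, Measure.coe_add, Measure.coe_smul, Pi.add_apply, Pi.smul_apply, measure_univ,
    smul_eq_mul, mul_one]
  rw [← ENNReal.ofReal_add (ew_nonneg hp _ _) (ew_nonneg hp _ _)]
  simp [ew]

lemma nu_singleton (p : ℕ → ℝ) {n : ℕ} (e : EdgeIdx n) (b : Bool) :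
    nu p e {b} = ENNReal.ofReal (ew p e b) := by
  cases b <;> simp [nu]

instance nu_sf (p : ℕ → ℝ) {n : ℕ} (e : EdgeIdx n) : IsFiniteMeasure (nu p e) := by
  constructor
  simp [nu]

lemma mu_prob {p : ℕ → ℝ} (hp : ∀ i, 0 ≤ p i ∧ p i < 1) (n : ℕ) :
    IsProbabilityMeasure (mu p n) := by
  have := fun e : EdgeIdx n => nu_prob hp e
  unfold mu; infer_instance

instance mu_fin (p : ℕ → ℝ) (n : ℕ) : IsFiniteMeasure (mu p n) := by
  unfold mu; infer_instance

lemma mu_singleton {p : ℕ → ℝ} (hp : ∀ i, 0 ≤ p i ∧ p i < 1) {n : ℕ} (ω : Sample n) :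
    mu p n {ω} = ENNReal.ofReal (sampleWeight p ω) := by
  unfold mu
  rw [Measure.pi_singleton]
  simp only [nu_singleton]
  rw [← ENNReal.ofReal_prod_of_nonneg (fun e _ => ew_nonneg hp _ _)]
  rfl

lemma sampleWeight_nonneg {p : ℕ → ℝ} (hp : ∀ i, 0 ≤ p i ∧ p i < 1) {n : ℕ} (ω : Sample n) :
    0 ≤ sampleWeight p ω :=
  Finset.prod_nonneg (fun e _ => ew_nonneg hp e (ω e))

lemma Pr_eq {p : ℕ → ℝ} (hp : ∀ i, 0 ≤ p i ∧ p i < 1) (n : ℕ) (P : Sample n → Prop) :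
    Pr p n P = (mu p n).real {ω | P ω} := by
  classical
  have h : {ω | P ω} = ((Finset.univ.filter P : Finset (Sample n)) : Set (Sample n)) := by
    ext; simp
  rw [h, ← sum_measureReal_singleton, Pr, ← Finset.sum_filter]
  apply Finset.sum_congr
  · ext; simp
  · intro ω _
    rw [measureReal_def, mu_singleton hp, ENNReal.toReal_ofReal (sampleWeight_nonneg hp ω)]

/-- cylinder event -/
def cyl {n : ℕ} (B : Finset (EdgeIdx n)) (σ : Sample n) : Set (Sample n) :=
  {ω | ∀ e ∈ B, ω e = σ e}

lemma mu_cyl {p : ℕ → ℝ} (hp : ∀ i, 0 ≤ p i ∧ p i < 1) {n : ℕ} (B : Finset (EdgeIdx n))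
    (σ : Sample n) : mu p n (cyl B σ) = ∏ e ∈ B, nu p e {σ e} := by
  classical
  have := fun e : EdgeIdx n => nu_prob hp e
  have h : cyl B σ = Set.pi Set.univ (fun e => if e ∈ B then {σ e} else Set.univ) := by
    ext ω
    simp only [cyl, Set.mem_ofPred_eq, Set.mem_pi, Set.mem_univ, true_implies]
    refine forall_congr' fun e => ?_
    by_cases he : e ∈ B <;> simp [he]
  rw [h, mu, Measure.pi_pi, ← Finset.prod_subset (Finset.subset_univ B)]
  · exact Finset.prod_congr rfl fun e he => by simp [he]
  · intro e _ he
    rw [if_neg he]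
    exact measure_univ

lemma mu_real_cyl {p : ℕ → ℝ} (hp : ∀ i, 0 ≤ p i ∧ p i < 1) {n : ℕ} (B : Finset (EdgeIdx n))
    (σ : Sample n) : (mu p n).real (cyl B σ) = ∏ e ∈ B, ew p e (σ e) := by
  rw [measureReal_def, mu_cyl hp, ENNReal.toReal_prod]
  exact Finset.prod_congr rfl fun e _ => by
    rw [nu_singleton, ENNReal.toReal_ofReal (ew_nonneg hp _ _)]

lemma mu_blocks {p : ℕ → ℝ} (hp : ∀ i, 0 ≤ p i ∧ p i < 1) {n : ℕ} (T : ℕ)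
    (B : ℕ → Finset (EdgeIdx n)) (hB : ∀ i j, i ≠ j → Disjoint (B i) (B j)) (σ : Sample n)
    (q : ℝ)
    (hq : ∀ t, q ≤ (mu p n).real (cyl (B t) σ)) :
    (mu p n).real {ω | ¬ ∃ t < T, ω ∈ cyl (B t) σ} ≤ (1 - q) ^ T := by
  classical
  have := mu_prob hp n
  have hind : iIndepSet (fun t => cyl (B t) σ) (mu p n) := by
    rw [iIndepSet_iff_meas_biInter (fun i => MeasurableSet.of_discrete)]
    intro s
    have : (⋂ i ∈ s, cyl (B i) σ) = cyl (s.biUnion B) σ := by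
      ext ω
      simp only [cyl, Set.mem_iInter, Set.mem_ofPred_eq, Finset.mem_biUnion]
      constructor
      · rintro h e ⟨i, hi, he⟩
        exact h i hi e he
      · intro h i hi e he
        exact h e ⟨i, hi, he⟩
    rw [this, mu_cyl hp, Finset.prod_biUnion (fun i _ j _ hij => hB i j hij)]
    exact Finset.prod_congr rfl fun i _ => (mu_cyl hp _ _).symm
  rw [iIndepSet_iff_iIndep] at hind
  have hset : {ω | ¬ ∃ t < T, ω ∈ cyl (B t) σ} = ⋂ t ∈ Finset.range T, (cyl (B t) σ)ᶜ := by
    ext ω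
    simp
  have h2 := hind.meas_biInter (S := Finset.range T) (s := fun t => (cyl (B t) σ)ᶜ)
    (fun i _ => (MeasurableSpace.measurableSet_generateFrom (Set.mem_singleton _)).compl)
  rw [hset, measureReal_def, h2, ENNReal.toReal_prod]
  calc _ ≤ ∏ t ∈ Finset.range T, (1 - q) := by
        apply Finset.prod_le_prod
        · intros; positivity
        · intro t _
          have := probReal_compl_eq_one_sub (μ := mu p n) (s := cyl (B t) σ)
            MeasurableSet.of_discrete
          rw [← measureReal_def, this]
          linarith [hq t]
    _ = _ := by simp

/-- the star property -/
def Star {n : ℕ} (s : ℕ) (ω : Sample n) : Prop :=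
  ∃ (c : Fin n) (x : Fin s → Fin n), Function.Injective x ∧
    ∀ i, sampleAdj ω c (x i) ∧ ∀ y, sampleAdj ω (x i) y → y = c

open FirstOrder.Language in
lemma exists_sentence (s : ℕ) : ∃ ψ : Language.graph.Sentence,
    ∀ (n : ℕ) (ω : Sample n), SatL ω ψ ↔ Star s ω := by
  classical
  let V := Option (Fin s)
  let var1 : V → Language.graph.Term (Empty ⊕ V) := fun v => Term.var (Sum.inr v)
  let var2 : V → Language.graph.Term ((Empty ⊕ V) ⊕ Unit) := fun v => Term.var (Sum.inl (Sum.inr v))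
  let yv : Language.graph.Term ((Empty ⊕ V) ⊕ Unit) := Term.var (Sum.inr ())
  let φ1 : Language.graph.Formula (Empty ⊕ V) :=
    Formula.iInf (fun ij : Fin s × Fin s =>
      if ij.1 = ij.2 then ⊤ else (Term.equal (var1 (some ij.1)) (var1 (some ij.2))).not)
  let φ2 : Language.graph.Formula (Empty ⊕ V) :=
    Formula.iInf (fun i : Fin s => Relations.formula₂ adj (var1 none) (var1 (some i)))
  let φ3 : Language.graph.Formula (Empty ⊕ V) :=
    Formula.iInf (fun i : Fin s => Formula.iAlls Unit
      ((Relations.formula₂ adj (var2 (some i)) yv).imp (Term.equal yv (var2 none))))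
  refine ⟨Formula.iExs V (φ1 ⊓ (φ2 ⊓ φ3)), fun n ω => ?_⟩
  let _ := graphStructure ω
  have hadj : ∀ a b : Fin n, Structure.RelMap (adj : Language.graph.Relations 2) ![a, b] ↔
      sampleAdj ω a b := fun a b => Iff.rfl
  have : SatL ω (Formula.iExs V (φ1 ⊓ (φ2 ⊓ φ3))) ↔ 
      ∃ z : V → Fin n, (∀ ij : Fin s × Fin s, ij.1 ≠ ij.2 → z (some ij.1) ≠ z (some ij.2)) ∧
        (∀ i, sampleAdj ω (z none) (z (some i))) ∧
        (∀ i, ∀ y : Unit → Fin n, sampleAdj ω (z (some i)) (y ()) → y () = z none) := by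
    unfold SatL Sentence.Realize
    rw [Formula.realize_iExs]
    refine exists_congr fun z => ?_
    rw [Formula.realize_inf, Formula.realize_inf, Formula.realize_iInf, Formula.realize_iInf,
      Formula.realize_iInf]
    refine and_congr (forall_congr' fun ij => ?_) (and_congr (forall_congr' fun i => ?_)
      (forall_congr' fun i => ?_))
    · by_cases h : ij.1 = ij.2
      · simp [h]
      · simp [h, var1, Formula.realize_not, Formula.realize_equal]
    · rw [Formula.realize_rel₂, hadj]; simp [var1]
    · rw [Formula.realize_iAlls]
      refine forall_congr' fun y => ?_
      rw [Formula.realize_imp, Formula.realize_rel₂, hadj, Formula.realize_equal]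
      simp [var2, yv]
  rw [this]
  constructor
  · rintro ⟨z, h1, h2, h3⟩
    refine ⟨z none, fun i => z (some i), ?_, fun i => ⟨h2 i, fun y hy => h3 i (fun _ => y) hy⟩⟩
    intro i j hij
    by_contra hne
    exact h1 (i, j) hne hij
  · rintro ⟨c, x, hx, h⟩
    refine ⟨fun o => o.elim c x, ?_, fun i => (h i).1, fun i y hy => (h i).2 _ hy⟩
    intro ij hne heq
    exact hne (hx heq)

lemma mu_mono {p : ℕ → ℝ} (hp : ∀ i, 0 ≤ p i ∧ p i < 1) {n : ℕ} {A B : Set (Sample n)}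
    (h : ∀ ω ∈ A, (∀ e, ω e = true → p (edist' e) ≠ 0) → ω ∈ B) :
    (mu p n).real A ≤ (mu p n).real B := by
  rw [measureReal_def, measureReal_def]
  refine ENNReal.toReal_mono (measure_ne_top _ _) (measure_mono_ae ?_)
  have : ∀ᵐ ω ∂(mu p n), (ω ∈ A → ω ∈ B) := by
    rw [ae_iff_of_countable]
    intro ω hω hA
    refine h ω hA fun e he hpe => hω ?_
    rw [mu_singleton hp, sampleWeight, Finset.prod_eq_zero (Finset.mem_univ e)]
    · simp
    · rw [if_pos he]; exact hpe
  exact this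

lemma adj_of_edge {n : ℕ} {ω : Sample n} {e : EdgeIdx n} (h : ω e = true) :
    sampleAdj ω e.1.1 e.1.2 := ⟨e, h, Or.inl ⟨rfl, rfl⟩⟩

lemma adj_symm {n : ℕ} {ω : Sample n} {v w : Fin n} (h : sampleAdj ω v w) :
    sampleAdj ω w v := by
  obtain ⟨e, he, h⟩ := h
  exact ⟨e, he, h.symm⟩

lemma star_of_cyl {p : ℕ → ℝ} {D s n t L : ℕ} (hL : L = 4 * D) (hD1 : 1 ≤ D)
    (hD : ∀ i, D < i → p i = 0) (hsD : s ≤ D) (ht : L * t + L ≤ n) (ω : Sample n)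
    (hω : ∀ e, ω e = true → p (edist' e) ≠ 0)
    (hc : ∀ e : EdgeIdx n, L * t ≤ e.1.1.val → e.1.2.val < L * t + L →
      (ω e = true ↔ (e.1.1.val = L * t + D ∧ e.1.2.val - e.1.1.val ≤ s))) :
    Star s ω := by
  generalize hK : L * t = K at *
  refine ⟨⟨K + D, by omega⟩, fun i => ⟨K + D + 1 + i, by omega⟩, ?_, ?_⟩
  · intro i j hij
    simp only [Fin.mk.injEq] at hij
    ext; omega
  · intro i
    have hi := i.2
    constructor
    · let e : EdgeIdx n := ⟨(⟨K + D, by omega⟩, ⟨K + D + 1 + i, by omega⟩), by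
        simp only [Fin.mk_lt_mk]; omega⟩
      have : ω e = true := by
        refine (hc e ?_ ?_).2 ⟨rfl, ?_⟩
        · change K ≤ K + D; omega
        · change K + D + 1 + i.val < K + L; omega
        · change K + D + 1 + i.val - (K + D) ≤ s; omega
      exact adj_of_edge this
    · rintro y ⟨e, he, hxy⟩
      have h1 : edist' e ≤ D := by
        by_contra hcon
        exact hω e he (hD _ (not_le.1 hcon))
      unfold edist' at h1
      have h2 : e.1.1.val < e.1.2.val := e.2
      replace hxy : (e.1.1.val = K + D + 1 + i.val ∧ e.1.2.val = y.val) ∨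
        (e.1.1.val = y.val ∧ e.1.2.val = K + D + 1 + i.val) := hxy
      have h4 : K ≤ e.1.1.val := by omega
      have h5 : e.1.2.val < K + L := by omega
      have h3 := (hc e h4 h5).1 he
      apply Fin.ext
      change y.val = K + D
      omega

lemma exists_r {p : ℕ → ℝ} (hp : ∀ i, 0 ≤ p i ∧ p i < 1) {D s : ℕ}
    (hD : ∀ i, D < i → p i = 0) (hpos : ∀ i, 1 ≤ i → i ≤ s → 0 < p i) :
    ∃ r : ℝ, 0 < r ∧ r ≤ 1 ∧ (∀ i, r ≤ 1 - p i) ∧ ∀ i, 1 ≤ i → i ≤ s → r ≤ p i := by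
  obtain ⟨j, _, hj⟩ := Finset.exists_min_image (Finset.range (D + 1)) (fun i => 1 - p i)
    ⟨0, by simp⟩
  have hr1 : ∀ i, 1 - p j ≤ 1 - p i := by
    intro i
    by_cases h : i ≤ D
    · exact hj i (by simp; omega)
    · rw [hD i (by omega)]; linarith [(hp j).1]
  have : ∃ r : ℝ, 0 < r ∧ ∀ i, 1 ≤ i → i ≤ s → r ≤ p i := by
    rcases Nat.eq_zero_or_pos s with h | h
    · exact ⟨1, one_pos, fun i _ _ => by omega⟩
    · obtain ⟨k, hk, hk'⟩ := Finset.exists_min_image (Finset.Icc 1 s) p ⟨1, by simp; omega⟩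
      simp at hk
      exact ⟨p k, hpos k hk.1 hk.2, fun i h1 h2 => hk' i (by simp; omega)⟩
  obtain ⟨r, hr, hr'⟩ := this
  refine ⟨min (1 - p j) r, lt_min (by linarith [(hp j).2]) hr, ?_, ?_, ?_⟩
  · exact (min_le_left _ _).trans (by linarith [(hp j).1])
  · exact fun i => (min_le_left _ _).trans (hr1 i)
  · exact fun i h1 h2 => (min_le_right _ _).trans (hr' i h1 h2)

lemma star_tendsto {p : ℕ → ℝ} (hp : ∀ i, 0 ≤ p i ∧ p i < 1) {D s : ℕ}
    (hD1 : 1 ≤ D) (hsD : s ≤ D)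
    (hD : ∀ i, D < i → p i = 0) (hpos : ∀ i, 1 ≤ i → i ≤ s → 0 < p i) :
    Tendsto (fun n => (mu p n).real {ω | Star s ω}) atTop (nhds 1) := by
  classical
  obtain ⟨r, hr0, hr1, hrp, hrs⟩ := exists_r hp hD hpos
  set L := 4 * D with hL
  have hLpos : 0 < L := by omega
  set q := r ^ (L * L) with hq
  have hq0 : 0 < q := by positivity
  have hq1 : q ≤ 1 := pow_le_one₀ hr0.le hr1
  have key : ∀ n, 1 - (1 - q) ^ (n / L) ≤ (mu p n).real {ω | Star s ω} := by
    intro n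
    have := mu_prob hp n
    let B : ℕ → Finset (EdgeIdx n) := fun t =>
      Finset.univ.filter (fun e => e.1.1.val / L = t ∧ e.1.2.val / L = t)
    let σ : Sample n := fun e => decide (e.1.1.val % L = D ∧ e.1.2.val - e.1.1.val ≤ s)
    have hB : ∀ i j, i ≠ j → Disjoint (B i) (B j) := by
      intro i j hij
      rw [Finset.disjoint_left]
      intro e he he'
      simp only [B, Finset.mem_filter, Finset.mem_univ, true_and] at he he'
      omega
    have hcard : ∀ t, (B t).card ≤ L * L := by
      intro t
      have : (B t).card ≤ (Finset.range L ×ˢ Finset.range L).card := by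
        apply Finset.card_le_card_of_injOn (fun e => (e.1.1.val % L, e.1.2.val % L))
        · intro e _
          simp [Nat.mod_lt _ hLpos]
        · intro e he e' he' h
          simp only [B, Finset.coe_filter, Finset.mem_univ, true_and, Set.mem_ofPred_eq] at he he'
          simp only [Prod.mk.injEq] at h
          have a1 := Nat.div_add_mod e.1.1.val L
          have a2 := Nat.div_add_mod e.1.2.val L
          have a3 := Nat.div_add_mod e'.1.1.val L
          have a4 := Nat.div_add_mod e'.1.2.val L
          rw [he.1] at a1
          rw [he.2] at a2
          rw [he'.1] at a3
          rw [he'.2] at a4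
          apply Subtype.ext
          apply Prod.ext <;> ext <;> omega
      simpa using this
    have hqB : ∀ t, q ≤ (mu p n).real (cyl (B t) σ) := by
      intro t
      rw [mu_real_cyl hp]
      calc q ≤ r ^ (B t).card := pow_le_pow_of_le_one hr0.le hr1 (hcard t)
        _ = ∏ e ∈ B t, r := by simp
        _ ≤ _ := by
          apply Finset.prod_le_prod
          · intros; exact hr0.le
          · intro e _
            unfold ew
            split_ifs with h
            · simp only [σ, decide_eq_true_eq] at h
              have : e.1.1.val < e.1.2.val := e.2
              exact hrs _ (by unfold edist'; omega) h.2
            · exact hrp _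
    have h1 := mu_blocks hp (n / L) B hB σ q hqB
    have h2 : (mu p n).real {ω | ∃ t < n / L, ω ∈ cyl (B t) σ} ≤
        (mu p n).real {ω | Star s ω} := by
      apply mu_mono hp
      rintro ω ⟨t, ht, hω⟩ hne
      have htn : L * t + L ≤ n := by
        have := Nat.mul_le_mul_left L (Nat.succ_le_of_lt ht)
        have h' := Nat.mul_div_le n L
        rw [Nat.succ_eq_add_one, mul_add, mul_one] at this
        omega
      refine star_of_cyl hL hD1 hD hsD htn ω hne ?_
      intro e h1 h2
      have h3 : e.1.1.val < e.1.2.val := e.2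
      have e1 : e.1.1.val / L = t := by
        have hcm := mul_comm L t
        apply Nat.div_eq_of_lt_le (by omega)
        rw [Nat.succ_mul]; omega
      have e2 : e.1.2.val / L = t := by
        have hcm := mul_comm L t
        apply Nat.div_eq_of_lt_le (by omega)
        rw [Nat.succ_mul]; omega
      have := hω e (by simp [B, e1, e2])
      rw [this]
      simp only [σ, decide_eq_true_eq]
      have a1 := Nat.div_add_mod e.1.1.val L
      rw [e1] at a1
      constructor
      · rintro ⟨h, h'⟩; exact ⟨by omega, h'⟩
      · rintro ⟨h, h'⟩; exact ⟨by omega, h'⟩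
    have h3 := probReal_compl_eq_one_sub (μ := mu p n)
      (s := {ω | ∃ t < n / L, ω ∈ cyl (B t) σ}) MeasurableSet.of_discrete
    have h4 : {ω | ∃ t < n / L, ω ∈ cyl (B t) σ}ᶜ = {ω | ¬ ∃ t < n / L, ω ∈ cyl (B t) σ} := rfl
    rw [h4] at h3
    linarith
  have hdiv : Tendsto (fun n : ℕ => n / L) atTop atTop :=
    Nat.tendsto_div_const_atTop hLpos.ne'
  have hlim : Tendsto (fun n : ℕ => 1 - (1 - q) ^ (n / L)) atTop (nhds 1) := by
    have := (tendsto_pow_atTop_nhds_zero_of_lt_one (r := 1 - q) (by linarith) (by linarith)).comp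
      hdiv
    simpa using this.const_sub 1
  refine tendsto_of_tendsto_of_tendsto_of_le_of_le hlim tendsto_const_nhds key ?_
  intro n
  have := mu_prob hp n
  exact measureReal_le_one

/-- the edge of length `a` at vertex `v` -/
def ed {a : ℕ} (ha : 0 < a) (v : Fin (2 * a)) : EdgeIdx (2 * a) :=
  if h : v.val < a then ⟨(v, ⟨v.val + a, by omega⟩), by simp only [Fin.lt_def]; omega⟩
  else ⟨(⟨v.val - a, by omega⟩, v), by simp only [Fin.lt_def]; omega⟩

lemma ed_spec {a : ℕ} (ha : 0 < a) (v : Fin (2 * a)) :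
    (ed ha v).1.2.val = (ed ha v).1.1.val + a ∧
      ((ed ha v).1.1 = v ∨ (ed ha v).1.2 = v) := by
  unfold ed
  split_ifs with h
  · simp
  · simp; omega

lemma star_bound {p : ℕ → ℝ} (hp : ∀ i, 0 ≤ p i ∧ p i < 1) {D a m : ℕ} (ha : 2 * D < a)
    (hsupp : ∀ i, p i ≠ 0 → i ≤ D ∨ i = a) :
    (mu p (2 * a)).real {ω | Star (m + 1) ω} ≤ 2 * a * 2 ^ (2 * D + 1) * (1 - p a) ^ m := by
  classical
  have ha0 : 0 < a := by omega
  let near : Fin (2 * a) → Finset (Fin (2 * a)) := fun c =>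
    Finset.univ.filter (fun v => v.val ≤ c.val + D ∧ c.val ≤ v.val + D)
  have hnear : ∀ c, (near c).card ≤ 2 * D + 1 := by
    intro c
    have : (near c).card ≤ (Finset.Icc (c.val - D) (c.val + D)).card := by
      apply Finset.card_le_card_of_injOn (fun v => v.val)
      · intro v hv
        simp only [near, Finset.coe_filter, Finset.mem_univ, true_and, Set.mem_ofPred_eq] at hv
        simp
        omega
      · intro v _ w _ h
        exact Fin.ext h
    rw [Nat.card_Icc] at this
    omega
  have hinj : ∀ c, Set.InjOn (ed ha0) (near c) := by
    intro c v hv w hw h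
    simp only [near, Finset.coe_filter, Finset.mem_univ, true_and, Set.mem_ofPred_eq] at hv hw
    have h1 := ed_spec ha0 v
    have h2 := ed_spec ha0 w
    rw [← h] at h2
    simp only [Fin.ext_iff] at h1 h2 ⊢
    omega
  let ev : Finset (Fin (2 * a)) → Set (Sample (2 * a)) :=
    fun X => cyl (X.image (ed ha0)) (fun _ => false)
  have hev : ∀ c, ∀ X ∈ (near c).powersetCard m, (mu p (2 * a)).real (ev X) = (1 - p a) ^ m := by
    intro c X hX
    rw [Finset.mem_powersetCard] at hX
    rw [mu_real_cyl hp, Finset.prod_image ((hinj c).mono (by exact_mod_cast hX.1)), ← hX.2,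
      ← Finset.prod_const]
    refine Finset.prod_congr rfl fun v _ => ?_
    have h1 := ed_spec ha0 v
    simp only [ew, edist', h1.1]
    simp
  have hsub : (mu p (2 * a)).real {ω | Star (m + 1) ω} ≤
      (mu p (2 * a)).real (⋃ c ∈ (Finset.univ : Finset (Fin (2 * a))),
        ⋃ X ∈ (near c).powersetCard m, ev X) := by
    apply mu_mono hp
    rintro ω ⟨c, x, hx, hstar⟩ hne
    let bad : Finset (Fin (2 * a)) :=
      Finset.univ.filter (fun v => v.val + a = c.val ∨ c.val + a = v.val)
    have hbad : bad.card ≤ 1 := by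
      rw [Finset.card_le_one]
      intro v hv w hw
      simp only [bad, Finset.mem_filter, Finset.mem_univ, true_and] at hv hw
      ext; omega
    have hcard : m ≤ (Finset.univ.image x \ bad).card := by
      have := Finset.le_card_sdiff bad (Finset.univ.image x)
      rw [Finset.card_image_of_injective _ hx, Finset.card_univ, Fintype.card_fin] at this
      omega
    obtain ⟨X, hX, hXc⟩ := Finset.exists_subset_card_eq hcard
    have hXs : ∀ v ∈ X, (∃ i, x i = v) ∧ ¬ (v.val + a = c.val ∨ c.val + a = v.val) := by
      intro v hv
      have := hX hv
      simpa [bad] using this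
    simp only [Set.mem_iUnion]
    refine ⟨c, Finset.mem_univ _, X, ?_, ?_⟩
    · rw [Finset.mem_powersetCard]
      refine ⟨fun v hv => ?_, hXc⟩
      obtain ⟨⟨i, rfl⟩, hb⟩ := hXs v hv
      obtain ⟨e, he, hxy⟩ := (hstar i).1
      have h1 := hsupp _ (hne e he)
      have h2 : e.1.1.val < e.1.2.val := e.2
      unfold edist' at h1
      simp only [near, Finset.mem_filter, Finset.mem_univ, true_and]
      omega
    · intro e he
      rw [Finset.mem_image] at he
      obtain ⟨v, hv, rfl⟩ := he
      obtain ⟨⟨i, rfl⟩, hb⟩ := hXs v hv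
      by_contra hcon
      rw [Bool.not_eq_false] at hcon
      have hadj := adj_of_edge hcon
      have h1 := ed_spec ha0 (x i)
      rcases h1.2 with h | h
      · rw [h] at hadj
        have := (hstar i).2 _ hadj
        have h3 := h1.1
        rw [this, h] at h3
        omega
      · rw [h] at hadj
        have := (hstar i).2 _ (adj_symm hadj)
        have h3 := h1.1
        rw [this, h] at h3
        omega
  have hθ : 0 ≤ 1 - p a := by linarith [(hp a).2]
  refine hsub.trans ((measureReal_biUnion_finset_le _ _).trans ?_)
  calc _ ≤ ∑ c : Fin (2 * a), (2 : ℝ) ^ (2 * D + 1) * (1 - p a) ^ m := by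
        apply Finset.sum_le_sum
        intro c _
        refine (measureReal_biUnion_finset_le _ _).trans ?_
        rw [Finset.sum_congr rfl (hev c), Finset.sum_const, nsmul_eq_mul]
        apply mul_le_mul_of_nonneg_right _ (by positivity)
        rw [Finset.card_powersetCard]
        calc (((near c).card.choose m : ℕ) : ℝ) ≤ ((2 ^ (near c).card : ℕ) : ℝ) := by
              exact_mod_cast Nat.choose_le_two_pow _ _
          _ ≤ _ := by
              push_cast
              exact pow_le_pow_right₀ (by norm_num) (hnear c)
    _ = _ := by
        rw [Finset.sum_const, nsmul_eq_mul, Finset.card_univ, Fintype.card_fin]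
        push_cast; ring

open scoped Classical in
/-- the edge probability sequence attached to a set of distances -/
noncomputable def pp (s : ℕ) (δ : ℝ) (A : Set ℕ) (i : ℕ) : ℝ :=
  if i ≤ s then 1 / 2 else if i ∈ A then 1 - (i : ℝ) ^ (-δ) else 0

lemma pp_good (s : ℕ) {δ : ℝ} (hδ : 0 < δ) (A : Set ℕ) (i : ℕ) :
    0 ≤ pp s δ A i ∧ pp s δ A i < 1 := by
  unfold pp
  split_ifs with h1 h2
  · norm_num
  · have hi : (1 : ℝ) ≤ i := by exact_mod_cast (by omega : 1 ≤ i)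
    have h3 : (i : ℝ) ^ (-δ) ≤ 1 := Real.rpow_le_one_of_one_le_of_nonpos hi (by linarith)
    have h4 : 0 < (i : ℝ) ^ (-δ) := Real.rpow_pos_of_pos (by linarith) _
    constructor <;> linarith
  · norm_num

lemma mu_congr {p p' : ℕ → ℝ} {n : ℕ} (h : ∀ i < n, p i = p' i) : mu p n = mu p' n := by
  have : ∀ e : EdgeIdx n, nu p e = nu p' e := by
    intro e
    have : p (edist' e) = p' (edist' e) := h _ (by unfold edist'; omega)
    simp only [nu, ew, this]
  simp only [mu, this]

lemma prod_lower {f : ℕ → ℝ} (h0 : ∀ i, 0 < f i) (h1 : ∀ i, f i ≤ 1) {D : ℕ}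
    (hD : ∀ i, D < i → f i = 1) (n : ℕ) :
    ∏ i ∈ Finset.range (D + 1), f i ≤ ∏ i ∈ Finset.Icc 1 n, f i := by
  have e1 : ∏ i ∈ Finset.Icc 1 n ∩ Finset.range (D + 1), f i = ∏ i ∈ Finset.Icc 1 n, f i := by
    apply Finset.prod_subset Finset.inter_subset_left
    intro i hi hi'
    apply hD
    simp only [Finset.mem_inter, hi, true_and, Finset.mem_range] at hi'
    omega
  rw [← e1, ← Finset.prod_sdiff (Finset.inter_subset_right :
    Finset.Icc 1 n ∩ Finset.range (D + 1) ⊆ Finset.range (D + 1))]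
  apply mul_le_of_le_one_left
  · exact Finset.prod_nonneg fun i _ => (h0 i).le
  · exact Finset.prod_le_one (fun i _ => (h0 i).le) fun i _ => h1 i

lemma step (m : ℕ) {δ : ℝ} (hδ : 0 < δ) (hm : 1 < δ * m) (S : Finset ℕ) (k : ℕ) :
    ∃ a : ℕ, m + 1 < a ∧ k < a ∧ (∀ b ∈ S, 2 * b < a) ∧
      1 - 1 / ((k : ℝ) + 1) ≤ (mu (pp (m + 1) δ S) a).real {ω | Star (m + 1) ω} ∧
      (mu (pp (m + 1) δ (insert a S : Finset ℕ)) (2 * a)).real {ω | Star (m + 1) ω}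
        ≤ 1 / ((k : ℝ) + 1) ∧
      ∀ n, (a : ℝ) ^ (-δ) ≤ ∏ i ∈ Finset.Icc 1 n, (1 - pp (m + 1) δ S i) := by
  classical
  set D := max (m + 1) (S.sup id) with hDdef
  have hSD : ∀ b ∈ S, b ≤ D := fun b hb =>
    (Finset.le_sup (f := id) hb).trans (le_max_right _ _)
  have hmD : m + 1 ≤ D := le_max_left _ _
  have hk : (0 : ℝ) < 1 / ((k : ℝ) + 1) := by positivity
  have hgood := pp_good (m + 1) hδ (S : Set ℕ)
  have hzero : ∀ i, D < i → pp (m + 1) δ S i = 0 := by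
    intro i hi
    unfold pp
    rw [if_neg (by omega), if_neg]
    intro hiS
    have := hSD i (by exact_mod_cast hiS)
    omega
  have t1 := star_tendsto hgood (by omega) hmD hzero (fun i _ h2 => by
    unfold pp; rw [if_pos h2]; norm_num)
  have ev1 : ∀ᶠ a : ℕ in atTop,
      1 - 1 / ((k : ℝ) + 1) ≤ (mu (pp (m + 1) δ S) a).real {ω | Star (m + 1) ω} :=
    (t1.eventually (lt_mem_nhds (by linarith : 1 - 1 / ((k : ℝ) + 1) < 1))).mono
      fun _ h => h.le
  have t2 : Tendsto (fun a : ℕ => (2 : ℝ) * 2 ^ (2 * D + 1) * (a : ℝ) ^ (-(δ * m - 1))) atTop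
      (nhds 0) := by
    have := ((tendsto_rpow_neg_atTop (by linarith : 0 < δ * m - 1)).comp
      tendsto_natCast_atTop_atTop).const_mul ((2 : ℝ) * 2 ^ (2 * D + 1))
    simpa using this
  have ev2 := t2.eventually (gt_mem_nhds hk)
  have t3 : Tendsto (fun a : ℕ => (a : ℝ) ^ (-δ)) atTop (nhds 0) :=
    (tendsto_rpow_neg_atTop hδ).comp tendsto_natCast_atTop_atTop
  have hC : 0 < ∏ i ∈ Finset.range (D + 1), (1 - pp (m + 1) δ S i) :=
    Finset.prod_pos fun i _ => by linarith [(hgood i).2]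
  have ev3 := t3.eventually (gt_mem_nhds hC)
  obtain ⟨a, h1, h2, h3, h4, h5⟩ := (ev1.and (ev2.and (ev3.and
    ((eventually_gt_atTop k).and (eventually_gt_atTop (2 * D)))))).exists
  refine ⟨a, by omega, h4, fun b hb => by have := hSD b hb; omega, h1, ?_, ?_⟩
  · have hpa : 1 - pp (m + 1) δ (insert a S : Finset ℕ) a = (a : ℝ) ^ (-δ) := by
      unfold pp
      rw [if_neg (by omega), if_pos (by simp)]
      ring
    have := star_bound (m := m) (pp_good (m + 1) hδ ((insert a S : Finset ℕ) : Set ℕ)) h5 (by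
      intro i hi
      by_contra hcon
      push Not at hcon
      apply hi
      unfold pp
      rw [if_neg (by omega), if_neg]
      intro hiS
      have hiS' : i ∈ insert a S := by exact_mod_cast hiS
      rw [Finset.mem_insert] at hiS'
      rcases hiS' with h | h
      · exact hcon.2 h
      · have := hSD i h
        omega)
    refine this.trans (le_trans (le_of_eq ?_) h2.le)
    have ha : (0 : ℝ) < a := by exact_mod_cast (by omega : 0 < a)
    rw [hpa, ← Real.rpow_mul_natCast ha.le,
      show -(δ * (m : ℝ) - 1) = 1 + -δ * m by ring, Real.rpow_add ha, Real.rpow_one]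
    ring
  · intro n
    refine h3.le.trans (prod_lower (fun i => by linarith [(hgood i).2])
      (fun i => by linarith [(hgood i).1]) (fun i hi => by rw [hzero i hi]; ring) n)

lemma prod_insert_pp {s : ℕ} {δ : ℝ} {S : Finset ℕ} {a n : ℕ} (has : s < a) (haS : a ∉ S)
    (ha1 : 1 ≤ a) (han : a ≤ n) :
    ∏ i ∈ Finset.Icc 1 n, (1 - pp s δ (insert a S : Finset ℕ) i) =
      (∏ i ∈ Finset.Icc 1 n, (1 - pp s δ S i)) * (a : ℝ) ^ (-δ) := by
  classical
  have : ∀ i ∈ Finset.Icc 1 n, (1 - pp s δ (insert a S : Finset ℕ) i) =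
      (1 - pp s δ S i) * (if i = a then (a : ℝ) ^ (-δ) else 1) := by
    intro i _
    by_cases h : i = a
    · subst h
      unfold pp
      simp [haS, not_le.2 has]
    · unfold pp
      simp [h]
  rw [Finset.prod_congr rfl this, Finset.prod_mul_distrib]
  congr 1
  rw [Finset.prod_ite_eq', if_pos]
  simp; omega

end Helpers

/-- For every `ε > 0` there are a sequence `p̄` with `0 ≤ p i < 1` and a
first-order sentence `ψ` of the language `L` such that
`-log (∏_{i=1}^n (1 - p i)) / log n < ε` for all sufficiently large `n`, yet
`liminf Prob(n, p̄; ψ) = 0` while `limsup Prob(n, p̄; ψ) = 1`. -/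
theorem statement_1 (ε : ℝ) (hε : 0 < ε) :
    ∃ (p : ℕ → ℝ) (ψ : Language.graph.Sentence),
      (∀ i, 0 ≤ p i ∧ p i < 1) ∧
      (∀ᶠ n : ℕ in atTop,
        -Real.log (∏ i ∈ Finset.Icc 1 n, (1 - p i)) / Real.log n < ε) ∧
      liminf (fun n => ProbL p n ψ) atTop = 0 ∧
      limsup (fun n => ProbL p n ψ) atTop = 1 := by
  classical
  obtain ⟨δ, hδ, hδε⟩ : ∃ δ : ℝ, 0 < δ ∧ 2 * δ < ε := ⟨ε / 3, by linarith, by linarith⟩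
  obtain ⟨m, hm⟩ : ∃ m : ℕ, 1 < δ * m := by
    obtain ⟨m, hm⟩ := exists_nat_gt (1 / δ)
    refine ⟨m, ?_⟩
    rw [div_lt_iff₀ hδ] at hm
    linarith
  obtain ⟨ψ, hψ⟩ := exists_sentence (m + 1)
  choose g hg1 hg2 hg3 hg4 hg5 hg6 using step m hδ hm
  obtain ⟨S, hS0, hSs⟩ : ∃ S : ℕ → Finset ℕ, S 0 = ∅ ∧
      ∀ k, S (k + 1) = insert (g (S k) k) (S k) :=
    ⟨fun k => Nat.rec ∅ (fun k Sk => insert (g Sk k) Sk) k, rfl, fun _ => rfl⟩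
  obtain ⟨a, ha⟩ : ∃ a : ℕ → ℕ, ∀ k, g (S k) k = a k := ⟨_, fun _ => rfl⟩
  have hS : ∀ k, S (k + 1) = insert (a k) (S k) := fun k => by rw [hSs, ha]
  have hmem : ∀ k i : ℕ, i ∈ S k ↔ ∃ j < k, a j = i := by
    intro k
    induction k with
    | zero => intro i; simp [hS0]
    | succ k ih =>
      intro i
      rw [hS, Finset.mem_insert, ih]
      constructor
      · rintro (h | ⟨j, hj, h⟩)
        · exact ⟨k, by omega, h.symm⟩
        · exact ⟨j, by omega, h⟩
      · rintro ⟨j, hj, h⟩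
        rcases Nat.lt_succ_iff_lt_or_eq.1 hj with h' | h'
        · exact Or.inr ⟨j, h', h⟩
        · subst h'; exact Or.inl h.symm
  have ha2 : ∀ j k, j < k → 2 * a j < a k := fun j k hjk =>
    ha k ▸ hg3 (S k) k (a j) ((hmem k _).2 ⟨j, hjk, rfl⟩)
  have has : ∀ k, m + 1 < a k := fun k => ha k ▸ hg1 (S k) k
  have hak : ∀ k, k < a k := fun k => ha k ▸ hg2 (S k) k
  let A : Set ℕ := {i | ∃ k, a k = i}
  have hagree : ∀ k i : ℕ, i < a k → pp (m + 1) δ A i = pp (m + 1) δ ((S k : Finset ℕ) : Set ℕ) i := by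
    intro k i hi
    have : i ∈ A ↔ i ∈ (S k : Set ℕ) := by
      rw [Finset.mem_coe, hmem]
      constructor
      · rintro ⟨j, rfl⟩
        refine ⟨j, ?_, rfl⟩
        by_contra hcon
        rcases Nat.eq_or_lt_of_le (not_lt.1 hcon) with h | h
        · subst h; omega
        · have := ha2 k j h; omega
      · rintro ⟨j, _, h⟩
        exact ⟨j, h⟩
    unfold pp
    by_cases h : i ∈ A
    · rw [if_pos h, if_pos (this.1 h)]
    · rw [if_neg h, if_neg (fun h' => h (this.2 h'))]
  have hgood := pp_good (m + 1) hδ A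
  have hprob : ∀ n, ProbL (pp (m + 1) δ A) n ψ =
      (mu (pp (m + 1) δ A) n).real {ω | Star (m + 1) ω} := by
    intro n
    rw [ProbL, Pr_eq hgood]
    simp only [hψ]
  have hp0 : ∀ n, 0 ≤ ProbL (pp (m + 1) δ A) n ψ := fun n => by
    rw [hprob]; positivity
  have hp1 : ∀ n, ProbL (pp (m + 1) δ A) n ψ ≤ 1 := fun n => by
    have := mu_prob hgood n
    rw [hprob]; exact MeasureTheory.measureReal_le_one
  have hhigh : ∀ k : ℕ, 1 - 1 / ((k : ℝ) + 1) ≤ ProbL (pp (m + 1) δ A) (a k) ψ := by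
    intro k
    rw [hprob, mu_congr (hagree k)]
    have := hg4 (S k) k
    rwa [ha] at this
  have hlow : ∀ k : ℕ, ProbL (pp (m + 1) δ A) (2 * a k) ψ ≤ 1 / ((k : ℝ) + 1) := by
    intro k
    rw [hprob, mu_congr (fun i hi => hagree (k + 1) i (by
      have := ha2 k (k + 1) (by omega)
      omega))]
    have := hg5 (S k) k
    rwa [← hSs, ha] at this
  have hsmall : ∀ η : ℝ, 0 < η → ∀ N : ℕ, ∃ k ≥ N, 1 / ((k : ℝ) + 1) ≤ η := by
    intro η hη N
    have := (tendsto_one_div_add_atTop_nhds_zero_nat (𝕜 := ℝ)).eventually (gt_mem_nhds hη)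
    obtain ⟨k, h1, h2⟩ := (this.and (eventually_ge_atTop N)).exists
    exact ⟨k, h2, h1.le⟩
  have hbd1 : IsBoundedUnder (· ≤ ·) atTop (fun n => ProbL (pp (m + 1) δ A) n ψ) :=
    isBoundedUnder_of ⟨1, hp1⟩
  have hbd0 : IsBoundedUnder (· ≥ ·) atTop (fun n => ProbL (pp (m + 1) δ A) n ψ) :=
    isBoundedUnder_of ⟨0, hp0⟩
  refine ⟨pp (m + 1) δ A, ψ, hgood, ?_, ?_, ?_⟩
  · filter_upwards [eventually_ge_atTop (a 0)] with n hn
    obtain ⟨k, hk1, hk2⟩ : ∃ k, a k ≤ n ∧ n < a (k + 1) := by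
      refine ⟨Nat.findGreatest (fun k => a k ≤ n) n, ?_, ?_⟩
      · exact Nat.findGreatest_spec (P := fun k => a k ≤ n) (Nat.zero_le n) hn
      · by_contra hcon
        rw [not_lt] at hcon
        have h1 := hak (Nat.findGreatest (fun k => a k ≤ n) n + 1)
        have h2 : Nat.findGreatest (fun k => a k ≤ n) n + 1 ≤
            Nat.findGreatest (fun k => a k ≤ n) n := by
          apply Nat.le_findGreatest
          · omega
          · exact hcon
        omega
    have hak0 : (0 : ℝ) < a k := by exact_mod_cast (by have := has k; omega : 0 < a k)
    have hn2 : 2 ≤ n := by have := has k; omega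
    have hn1 : (1 : ℝ) < n := by exact_mod_cast (by omega : 1 < n)
    have hnotin : a k ∉ S k := by
      rw [hmem]
      rintro ⟨j, hj, h⟩
      have := ha2 j k hj
      have := has k
      omega
    have e1 : ∏ i ∈ Finset.Icc 1 n, (1 - pp (m + 1) δ A i) =
        (∏ i ∈ Finset.Icc 1 n, (1 - pp (m + 1) δ ((S k : Finset ℕ) : Set ℕ) i)) * (a k : ℝ) ^ (-δ) := by
      rw [← prod_insert_pp (has k) hnotin (by have := has k; omega) hk1]
      refine Finset.prod_congr rfl fun i hi => ?_
      rw [hagree (k + 1) i (by simp at hi; omega), hS]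
    have hle : (n : ℝ) ^ (-(2 * δ)) ≤ ∏ i ∈ Finset.Icc 1 n, (1 - pp (m + 1) δ A i) := by
      rw [e1]
      calc (n : ℝ) ^ (-(2 * δ)) ≤ (a k : ℝ) ^ (-(2 * δ)) :=
            Real.rpow_le_rpow_of_nonpos hak0 (by exact_mod_cast hk1) (by linarith)
        _ = (a k : ℝ) ^ (-δ) * (a k : ℝ) ^ (-δ) := by
            rw [← Real.rpow_add hak0]; congr 1; ring
        _ ≤ _ := mul_le_mul_of_nonneg_right (ha k ▸ hg6 (S k) k n) (by positivity)
    have hlog := Real.log_le_log (Real.rpow_pos_of_pos (by linarith) _) hle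
    rw [Real.log_rpow (by linarith)] at hlog
    have hlogn := Real.log_pos hn1
    rw [div_lt_iff₀ hlogn]
    nlinarith
  · apply le_antisymm
    · apply le_of_forall_pos_le_add
      intro η hη
      rw [zero_add]
      refine liminf_le_of_frequently_le ?_ hbd0
      rw [frequently_atTop]
      intro N
      obtain ⟨k, hk, hkη⟩ := hsmall η hη N
      exact ⟨2 * a k, by have := hak k; omega, (hlow k).trans hkη⟩
    · exact le_liminf_of_le hbd1.isCoboundedUnder_ge (Eventually.of_forall hp0)
  · apply le_antisymm
    · exact limsup_le_of_le hbd0.isCoboundedUnder_le (Eventually.of_forall hp1)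
    · apply le_of_forall_pos_le_add
      intro η hη
      rw [← sub_le_iff_le_add]
      refine le_limsup_of_frequently_le ?_ hbd1
      rw [frequently_atTop]
      intro N
      obtain ⟨k, hk, hkη⟩ := hsmall η hη N
      exact ⟨a k, by have := hak k; omega, le_trans (by linarith) (hhigh k)⟩

end RandomGraph
end

section
/- For every sequence ā = (a(1), a(2), …) with 0 ≤ a(i) < 1 for all i, there exists a sequence f : ℕ → ℕ such that for every sequence p̄ obtained from ā by inserting more than f(i) zero terms after the i-th term of ā (for each i), and for every first-order sentence ψ of the language L, the limit lim_{n→∞} Prob(n,p̄;ψ) exists and equals 0 or 1. -/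
open FirstOrder Filter

namespace RandomGraph

/-! ### Back-and-forth games on subsets of `ℕ` -/

def Atom (r s : ℕ → ℕ → Prop) (S : Set (ℕ × ℕ)) : Prop :=
  ∀ a ∈ S, ∀ b ∈ S, (a.1 = b.1 ↔ a.2 = b.2) ∧ (r a.1 b.1 ↔ s a.2 b.2)

def BF (X Y : Set ℕ) (r s : ℕ → ℕ → Prop) : ℕ → Set (ℕ × ℕ) → Prop
  | 0, S => Atom r s S
  | k + 1, S => Atom r s S ∧ (∀ x ∈ X, ∃ y ∈ Y, BF X Y r s k (insert (x, y) S)) ∧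
      (∀ y ∈ Y, ∃ x ∈ X, BF X Y r s k (insert (x, y) S))

theorem BF.atom {X Y r s k S} (h : BF X Y r s k S) : Atom r s S := by
  cases k with
  | zero => exact h
  | succ k => exact h.1

theorem BF.pred {X Y r s k} : ∀ {S}, BF X Y r s (k + 1) S → BF X Y r s k S := by
  induction k with
  | zero => intro S h; exact h.1
  | succ k ih =>
    intro S h
    refine ⟨h.1, fun x hx => ?_, fun y hy => ?_⟩
    · obtain ⟨y, hy, h'⟩ := h.2.1 x hx
      exact ⟨y, hy, ih h'⟩
    · obtain ⟨x, hx, h'⟩ := h.2.2 y hy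
      exact ⟨x, hx, ih h'⟩

theorem BF.mono {X Y r s k m S} (hmk : m ≤ k) (h : BF X Y r s k S) : BF X Y r s m S := by
  induction hmk with
  | refl => exact h
  | step _ ih => exact ih h.pred

def Ty : ℕ → ℕ → Type
  | 0, n => Fin n → Fin n → Prop × Prop
  | k + 1, n => (Fin n → Fin n → Prop × Prop) × Set (Ty k (n + 1))

theorem Ty.finite (k : ℕ) : ∀ n, Finite (Ty k n) := by
  induction k with
  | zero => intro n; unfold Ty; infer_instance
  | succ k ih => intro n; have := ih (n + 1); unfold Ty; infer_instance

def ty (X : Set ℕ) (r : ℕ → ℕ → Prop) : (k n : ℕ) → (Fin n → ℕ) → Ty k n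
  | 0, _, u => fun i j => (u i = u j, r (u i) (u j))
  | k + 1, n, u => (fun i j => (u i = u j, r (u i) (u j)),
      {t | ∃ x ∈ X, ty X r k (n + 1) (Fin.cons x u) = t})

theorem atom_of_eq {r s : ℕ → ℕ → Prop} {n} {u v : Fin n → ℕ}
    (h : (fun i j => (u i = u j, r (u i) (u j)) : Fin n → Fin n → Prop × Prop) =
      fun i j => (v i = v j, s (v i) (v j))) :
    Atom r s (Set.range fun i => (u i, v i)) := by
  rintro _ ⟨i, rfl⟩ _ ⟨j, rfl⟩
  have := congrFun (congrFun h i) j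
  simp only [Prod.mk.injEq] at this
  exact ⟨iff_of_eq this.1, iff_of_eq this.2⟩

theorem range_cons {n} (u v : Fin n → ℕ) (x y : ℕ) :
    (Set.range fun i => ((Fin.cons x u : Fin (n + 1) → ℕ) i, (Fin.cons y v : Fin (n + 1) → ℕ) i)) =
      insert (x, y) (Set.range fun i => (u i, v i)) := by
  ext a
  simp only [Set.mem_range, Set.mem_insert_iff, Fin.exists_fin_succ, Fin.cons_zero, Fin.cons_succ]
  exact or_congr_left eq_comm

theorem BF_of_ty {X Y : Set ℕ} {r s : ℕ → ℕ → Prop} (k : ℕ) : ∀ (n) (u v : Fin n → ℕ),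
    ty X r k n u = ty Y s k n v → BF X Y r s k (Set.range fun i => (u i, v i)) := by
  induction k with
  | zero => intro n u v h; exact atom_of_eq h
  | succ k ih =>
    intro n u v h
    have h1 := congrArg Prod.fst h
    have h2 := congrArg Prod.snd h
    refine ⟨atom_of_eq h1, fun x hx => ?_, fun y hy => ?_⟩
    · have : ty X r k (n + 1) (Fin.cons x u) ∈ (ty Y s (k + 1) n v).2 := by
        rw [← h2]; exact ⟨x, hx, rfl⟩
      obtain ⟨y, hy, e⟩ := this
      refine ⟨y, hy, ?_⟩
      rw [← range_cons]
      exact ih _ _ _ e.symm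
    · have : ty Y s k (n + 1) (Fin.cons y v) ∈ (ty X r (k + 1) n u).2 := by
        rw [h2]; exact ⟨y, hy, rfl⟩
      obtain ⟨x, hx, e⟩ := this
      refine ⟨x, hx, ?_⟩
      rw [← range_cons]
      exact ih _ _ _ e

theorem ty_image {X X' : Set ℕ} {r r' : ℕ → ℕ → Prop} (φ : ℕ → ℕ) (hφ : Function.Injective φ)
    (hX : X' = φ '' X) (hr : ∀ x ∈ X, ∀ y ∈ X, (r' (φ x) (φ y) ↔ r x y)) (k : ℕ) :
    ∀ (n) (u : Fin n → ℕ), (∀ i, u i ∈ X) → ty X' r' k n (φ ∘ u) = ty X r k n u := by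
  have key : ∀ (n) (u : Fin n → ℕ), (∀ i, u i ∈ X) →
      (fun i j => ((φ ∘ u) i = (φ ∘ u) j, r' ((φ ∘ u) i) ((φ ∘ u) j)) :
        Fin n → Fin n → Prop × Prop) = fun i j => (u i = u j, r (u i) (u j)) := by
    intro n u hu
    funext i j
    simp only [Function.comp, Prod.mk.injEq]
    exact ⟨propext hφ.eq_iff, propext (hr _ (hu i) _ (hu j))⟩
  induction k with
  | zero => intro n u hu; exact key n u hu
  | succ k ih =>
    intro n u hu
    have h2 : ∀ x ∈ X, ty X' r' k (n + 1) (Fin.cons (φ x) (φ ∘ u)) =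
        ty X r k (n + 1) (Fin.cons x u) := by
      intro x hx
      rw [← ih (n + 1) (Fin.cons x u)]
      · congr 1
        funext i
        refine Fin.cases ?_ (fun i => ?_) i <;> simp
      · intro i
        refine Fin.cases ?_ (fun i => ?_) i
        · simpa using hx
        · simpa using hu i
    refine Prod.ext (key n u hu) ?_
    ext t
    show (∃ x ∈ X', _ = t) ↔ (∃ x ∈ X, _ = t)
    subst hX
    constructor
    · rintro ⟨_, ⟨x, hx, rfl⟩, rfl⟩
      exact ⟨x, hx, (h2 x hx).symm⟩
    · rintro ⟨x, hx, rfl⟩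
      exact ⟨φ x, ⟨x, hx, rfl⟩, h2 x hx⟩

/-- The type of the whole structure. -/
def ty0 (X : Set ℕ) (r : ℕ → ℕ → Prop) (k : ℕ) : Ty k 0 := ty X r k 0 Fin.elim0

theorem BF_of_ty0 {X Y : Set ℕ} {r s : ℕ → ℕ → Prop} {k : ℕ} (h : ty0 X r k = ty0 Y s k) :
    BF X Y r s k ∅ := by
  have := BF_of_ty k 0 _ _ h
  simpa using this

theorem ty0_image {X X' : Set ℕ} {r r' : ℕ → ℕ → Prop} (φ : ℕ → ℕ) (hφ : Function.Injective φ)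
    (hX : X' = φ '' X) (hr : ∀ x ∈ X, ∀ y ∈ X, (r' (φ x) (φ y) ↔ r x y)) (k : ℕ) :
    ty0 X' r' k = ty0 X r k := by
  have := ty_image φ hφ hX hr k 0 Fin.elim0 (fun i => i.elim0)
  unfold ty0
  rw [← this]
  congr 1
  funext i; exact i.elim0

open scoped Classical in
theorem BF_comp {I J : Type} (X : I → Set ℕ) (Y : J → Set ℕ) (r s : ℕ → ℕ → Prop)
    (hXd : ∀ i i' x, x ∈ X i → x ∈ X i' → i = i') (hYd : ∀ i i' x, x ∈ Y i → x ∈ Y i' → i = i')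
    (hXe : ∀ i i' x x', x ∈ X i → x' ∈ X i' → r x x' → i = i')
    (hYe : ∀ i i' x x', x ∈ Y i → x' ∈ Y i' → s x x' → i = i') (k : ℕ)
    (hI : ∀ i, ∃ Q : Finset J, k ≤ Q.card ∧ ∀ j ∈ Q, BF (X i) (Y j) r s k ∅)
    (hJ : ∀ j, ∃ Q : Finset I, k ≤ Q.card ∧ ∀ i ∈ Q, BF (X i) (Y j) r s k ∅) (m : ℕ) :
    ∀ (S : Set (ℕ × ℕ)) (P : Finset (I × J)) (F : I × J → Set (ℕ × ℕ)),
      (∀ a ∈ P, ∀ b ∈ P, a.1 = b.1 ↔ a.2 = b.2) →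
      (∀ c ∈ P, BF (X c.1) (Y c.2) r s m (F c)) →
      (∀ c ∈ P, ∀ a ∈ F c, a.1 ∈ X c.1 ∧ a.2 ∈ Y c.2) →
      (∀ a ∈ S, ∃ c ∈ P, a ∈ F c) → P.card + m ≤ k →
      BF (⋃ i, X i) (⋃ j, Y j) r s m S := by
  have hatom : ∀ (m) (S : Set (ℕ × ℕ)) (P : Finset (I × J)) (F : I × J → Set (ℕ × ℕ)),
      (∀ a ∈ P, ∀ b ∈ P, a.1 = b.1 ↔ a.2 = b.2) →
      (∀ c ∈ P, BF (X c.1) (Y c.2) r s m (F c)) →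
      (∀ c ∈ P, ∀ a ∈ F c, a.1 ∈ X c.1 ∧ a.2 ∈ Y c.2) →
      (∀ a ∈ S, ∃ c ∈ P, a ∈ F c) → Atom r s S := by
    intro m S P F hP hB hF hS a ha b hb
    obtain ⟨c, hc, hac⟩ := hS a ha
    obtain ⟨d, hd, hbd⟩ := hS b hb
    by_cases hcd : c = d
    · subst hcd
      exact (hB c hc).atom a hac b hbd
    · have h1 : c.1 ≠ d.1 := fun h => hcd (Prod.ext h ((hP c hc d hd).1 h))
      have h2 : c.2 ≠ d.2 := fun h => hcd (Prod.ext ((hP c hc d hd).2 h) h)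
      obtain ⟨hax, hay⟩ := hF c hc a hac
      obtain ⟨hbx, hby⟩ := hF d hd b hbd
      refine ⟨iff_of_false ?_ ?_, iff_of_false ?_ ?_⟩
      · intro h; rw [← h] at hbx; exact h1 (hXd _ _ _ hax hbx)
      · intro h; rw [← h] at hby; exact h2 (hYd _ _ _ hay hby)
      · intro h; exact h1 (hXe _ _ _ _ hax hbx h)
      · intro h; exact h2 (hYe _ _ _ _ hay hby h)
  induction m with
  | zero => intro S P F hP hB hF hS _; exact hatom 0 S P F hP hB hF hS
  | succ m ih =>
    intro S P F hP hB hF hS hk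
    -- continuing inside an already matched pair
    have cont : ∀ c ∈ P, ∀ x ∈ X c.1, ∀ y ∈ Y c.2,
        BF (X c.1) (Y c.2) r s m (insert (x, y) (F c)) →
        BF (⋃ i, X i) (⋃ j, Y j) r s m (insert (x, y) S) := by
      intro c hc x hx y hy h
      refine ih _ P (Function.update F c (insert (x, y) (F c))) hP ?_ ?_ ?_ (by omega)
      · intro d hd
        by_cases hdc : d = c
        · subst hdc; simpa using h
        · rw [Function.update_of_ne hdc]; exact (hB d hd).pred
      · intro d hd a ha
        by_cases hdc : d = c
        · subst hdc
          simp only [Function.update_self, Set.mem_insert_iff] at ha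
          rcases ha with rfl | ha
          · exact ⟨hx, hy⟩
          · exact hF d hd a ha
        · rw [Function.update_of_ne hdc] at ha; exact hF d hd a ha
      · intro a ha
        rcases ha with rfl | ha
        · exact ⟨c, hc, by simp⟩
        · obtain ⟨d, hd, had⟩ := hS a ha
          refine ⟨d, hd, ?_⟩
          by_cases hdc : d = c
          · subst hdc; simp [had]
          · rw [Function.update_of_ne hdc]; exact had
    -- opening a new pair
    have opn : ∀ i j, (∀ c ∈ P, c.1 ≠ i) → (∀ c ∈ P, c.2 ≠ j) → ∀ x ∈ X i, ∀ y ∈ Y j,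
        BF (X i) (Y j) r s m (insert (x, y) ∅) →
        BF (⋃ i, X i) (⋃ j, Y j) r s m (insert (x, y) S) := by
      intro i j hi hj x hx y hy h
      have hne : ∀ d ∈ P, d ≠ (i, j) := fun d hd e => hi d hd (by rw [e])
      refine ih _ (insert (i, j) P) (Function.update F (i, j) (insert (x, y) ∅)) ?_ ?_ ?_ ?_ ?_
      · intro a ha b hb
        rw [Finset.mem_insert] at ha hb
        rcases ha with rfl | ha <;> rcases hb with rfl | hb
        · simp
        · exact iff_of_false (fun e => hi b hb e.symm) (fun e => hj b hb e.symm)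
        · exact iff_of_false (fun e => hi a ha e) (fun e => hj a ha e)
        · exact hP a ha b hb
      · intro d hd
        rw [Finset.mem_insert] at hd
        rcases hd with rfl | hd
        · simpa using h
        · rw [Function.update_of_ne (hne d hd)]; exact (hB d hd).pred
      · intro d hd a ha
        rw [Finset.mem_insert] at hd
        rcases hd with rfl | hd
        · simp at ha; subst ha; exact ⟨hx, hy⟩
        · rw [Function.update_of_ne (hne d hd)] at ha; exact hF d hd a ha
      · intro a ha
        rcases ha with rfl | ha
        · exact ⟨(i, j), by simp, by simp⟩
        · obtain ⟨d, hd, had⟩ := hS a ha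
          refine ⟨d, by simp [hd], ?_⟩
          rw [Function.update_of_ne (hne d hd)]; exact had
      · have := Finset.card_insert_le (i, j) P
        omega
    refine ⟨hatom _ S P F hP hB hF hS, ?_, ?_⟩
    · intro x hx
      obtain ⟨i, hi⟩ := Set.mem_iUnion.1 hx
      by_cases h : ∃ c ∈ P, c.1 = i
      · obtain ⟨c, hc, rfl⟩ := h
        obtain ⟨y, hy, h'⟩ := (hB c hc).2.1 x hi
        exact ⟨y, Set.mem_iUnion.2 ⟨_, hy⟩, cont c hc x hi y hy h'⟩
      · push Not at h
        obtain ⟨Q, hQ, hQB⟩ := hI i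
        have : ∃ j ∈ Q, j ∉ P.image Prod.snd := by
          apply Finset.exists_mem_notMem_of_card_lt_card
          have := Finset.card_image_le (s := P) (f := Prod.snd)
          omega
        obtain ⟨j, hjQ, hj⟩ := this
        have hb : BF (X i) (Y j) r s (m + 1) ∅ := (hQB j hjQ).mono (by omega)
        obtain ⟨y, hy, h'⟩ := hb.2.1 x hi
        refine ⟨y, Set.mem_iUnion.2 ⟨_, hy⟩, opn i j h ?_ x hi y hy h'⟩
        intro c hc e
        exact hj (Finset.mem_image.2 ⟨c, hc, e⟩)
    · intro y hy
      obtain ⟨j, hj⟩ := Set.mem_iUnion.1 hy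
      by_cases h : ∃ c ∈ P, c.2 = j
      · obtain ⟨c, hc, rfl⟩ := h
        obtain ⟨x, hx, h'⟩ := (hB c hc).2.2 y hj
        exact ⟨x, Set.mem_iUnion.2 ⟨_, hx⟩, cont c hc x hx y hj h'⟩
      · push Not at h
        obtain ⟨Q, hQ, hQB⟩ := hJ j
        have : ∃ i ∈ Q, i ∉ P.image Prod.fst := by
          apply Finset.exists_mem_notMem_of_card_lt_card
          have := Finset.card_image_le (s := P) (f := Prod.fst)
          omega
        obtain ⟨i, hiQ, hi⟩ := this
        have hb : BF (X i) (Y j) r s (m + 1) ∅ := (hQB i hiQ).mono (by omega)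
        obtain ⟨x, hx, h'⟩ := hb.2.2 y hj
        refine ⟨x, Set.mem_iUnion.2 ⟨_, hx⟩, opn i j ?_ h x hx y hj h'⟩
        intro c hc e
        exact hi (Finset.mem_image.2 ⟨c, hc, e⟩)

theorem adjVal_symm {n : ℕ} {ω : Sample n} {a b : ℕ} (h : adjVal ω a b) : adjVal ω b a := by
  obtain ⟨e, he, h⟩ := h
  exact ⟨e, he, h.symm⟩

theorem adjVal_irrefl {n : ℕ} {ω : Sample n} {a : ℕ} : ¬ adjVal ω a a := by
  rintro ⟨e, he, h⟩
  have := e.2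
  rw [Fin.lt_def] at this
  omega

/-- quantifier rank -/
def qr {n : ℕ} : Language.graph.BoundedFormula Empty n → ℕ
  | .falsum => 0
  | .equal _ _ => 0
  | .rel _ _ => 0
  | .imp f g => max (qr f) (qr g)
  | .all f => qr f + 1

theorem realize_iff {n n' : ℕ} (ω : Sample n) (ω' : Sample n') {m : ℕ}
    (φ : Language.graph.BoundedFormula Empty m) :
    ∀ (k : ℕ) (S : Set (ℕ × ℕ)), qr φ ≤ k →
      BF {x | x < n} {x | x < n'} (adjVal ω) (adjVal ω') k S →
      ∀ (xs : Fin m → Fin n) (ys : Fin m → Fin n'), (∀ i, ((xs i).val, (ys i).val) ∈ S) →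
      (@Language.BoundedFormula.Realize _ _ (graphStructure ω) _ _ φ default xs ↔
        @Language.BoundedFormula.Realize _ _ (graphStructure ω') _ _ φ default ys) := by
  have hterm : ∀ {m : ℕ} (t : Language.graph.Term (Empty ⊕ Fin m)), ∃ i : Fin m,
      t = Language.Term.var (Sum.inr i) := by
    intro m t
    cases t with
    | var v => rcases v with v | i
               · exact v.elim
               · exact ⟨i, rfl⟩
    | func f _ => exact isEmptyElim f
  induction φ with
  | falsum => intro k S _ _ xs ys _; exact Iff.rfl
  | equal t₁ t₂ =>
    intro k S _ hB xs ys hS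
    obtain ⟨i, rfl⟩ := hterm t₁
    obtain ⟨j, rfl⟩ := hterm t₂
    have := (hB.atom _ (hS i) _ (hS j)).1
    simp only [Fin.val_inj] at this
    simpa [Language.BoundedFormula.Realize, Language.Term.realize] using this
  | rel R ts =>
    intro k S _ hB xs ys hS
    cases R with
    | adj =>
    obtain ⟨i, hi⟩ := hterm (ts 0)
    obtain ⟨j, hj⟩ := hterm (ts 1)
    have := (hB.atom _ (hS i) _ (hS j)).2
    change adjVal ω
        (@Language.Term.realize _ _ (graphStructure ω) _ (Sum.elim default xs) (ts 0)).val
        (@Language.Term.realize _ _ (graphStructure ω) _ (Sum.elim default xs) (ts 1)).val ↔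
      adjVal ω'
        (@Language.Term.realize _ _ (graphStructure ω') _ (Sum.elim default ys) (ts 0)).val
        (@Language.Term.realize _ _ (graphStructure ω') _ (Sum.elim default ys) (ts 1)).val
    rw [hi, hj]
    exact this
  | imp f g ihf ihg =>
    intro k S hk hB xs ys hS
    simp only [qr, max_le_iff] at hk
    exact imp_congr (ihf k S hk.1 hB xs ys hS) (ihg k S hk.2 hB xs ys hS)
  | @all m f ih =>
    intro k S hk hB xs ys hS
    simp only [qr] at hk
    obtain ⟨k, rfl⟩ : ∃ k', k = k' + 1 := ⟨k - 1, by omega⟩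
    have hsn : ∀ (x : Fin n) (y : Fin n') (i : Fin (m + 1)),
        ((Fin.snoc (α := fun _ => Fin n) xs x i).val,
          (Fin.snoc (α := fun _ => Fin n') ys y i).val) ∈ insert (x.val, y.val) S := by
      intro x y i
      refine Fin.lastCases ?_ (fun i => ?_) i
      · simp
      · simp only [Fin.snoc_castSucc]
        exact Set.mem_insert_of_mem _ (hS i)
    constructor
    · intro h y
      obtain ⟨x, hx, h'⟩ := hB.2.2 y.val y.2
      exact (ih k _ (by omega) h' _ _ (hsn ⟨x, hx⟩ y)).1 (h ⟨x, hx⟩)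
    · intro h x
      obtain ⟨y, hy, h'⟩ := hB.2.1 x.val x.2
      exact (ih k _ (by omega) h' _ _ (hsn x ⟨y, hy⟩)).2 (h ⟨y, hy⟩)

theorem SatL_iff {n n' : ℕ} (ω : Sample n) (ω' : Sample n') (ψ : Language.graph.Sentence)
    (h : BF {x | x < n} {x | x < n'} (adjVal ω) (adjVal ω') (qr ψ) ∅) :
    SatL ω ψ ↔ SatL ω' ψ :=
  realize_iff ω ω' ψ _ ∅ le_rfl h _ _ (fun i => i.elim0)

/-! ### Good outcomes -/

/-- A finite graph with vertex set in `ℕ` that can occur with positive probability. -/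
def Poss (p : ℕ → ℝ) (X : Set ℕ) (r : ℕ → ℕ → Prop) : Prop :=
  X.Finite ∧ (∀ x ∈ X, ∀ y ∈ X, r x y → r y x) ∧ (∀ x ∈ X, ¬ r x x) ∧
    ∀ x ∈ X, ∀ y ∈ X, x < y → r x y → p (y - x) ≠ 0

theorem exists_reps (p : ℕ → ℝ) (k : ℕ) : ∃ (L : ℕ) (A : Fin L → Set ℕ)
    (R : Fin L → ℕ → ℕ → Prop), (∀ q, Poss p (A q) (R q)) ∧ ∀ X r, Poss p X r →
      ∃ Q : Finset (Fin L), k ≤ Q.card ∧ ∀ q ∈ Q, ty0 (A q) (R q) k = ty0 X r k := by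
  classical
  have := Ty.finite k 0
  let T := {t : Ty k 0 // ∃ X r, Poss p X r ∧ ty0 X r k = t}
  have hT : Finite (T × Fin k) := inferInstance
  obtain ⟨L, ⟨e⟩⟩ := Finite.exists_equiv_fin (T × Fin k)
  choose X r hX hr using fun t : T => t.2
  refine ⟨L, fun q => X (e.symm q).1, fun q => r (e.symm q).1, fun q => hX _, ?_⟩
  intro X' r' h
  let t : T := ⟨ty0 X' r' k, X', r', h, rfl⟩
  refine ⟨Finset.univ.image fun c : Fin k => e (t, c), ?_, ?_⟩
  · rw [Finset.card_image_of_injective]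
    · simp
    · intro c d h; simpa using h
  · intro q hq
    obtain ⟨c, _, rfl⟩ := Finset.mem_image.1 hq
    simpa using hr t

theorem exists_bound {p : ℕ → ℝ} {L : ℕ} {A : Fin L → Set ℕ} {R : Fin L → ℕ → ℕ → Prop}
    (h : ∀ q, Poss p (A q) (R q)) : ∃ D : ℕ, ∀ q, ∀ x ∈ A q, x < D := by
  have : (⋃ q, A q).Finite := Set.finite_iUnion fun q => (h q).1
  obtain ⟨D, hD⟩ := this.bddAbove
  exact ⟨D + 1, fun q x hx => Nat.lt_succ_of_le (hD (Set.mem_iUnion.2 ⟨q, hx⟩))⟩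

/-- The disjoint union of the graphs `(A q, R q)`, placed in consecutive intervals of length `D`. -/
def Rst {L : ℕ} (D : ℕ) (A : Fin L → Set ℕ) (R : Fin L → ℕ → ℕ → Prop) (x y : ℕ) : Prop :=
  ∃ q : Fin L, ∃ u ∈ A q, ∃ v ∈ A q, x = q * D + u ∧ y = q * D + v ∧ R q u v

/-- The interval `[t, t + M)` carries an isolated copy of the graph `U`. -/
def Iso {n : ℕ} (ω : Sample n) (M : ℕ) (U : ℕ → ℕ → Prop) (t : ℕ) : Prop :=
  ∀ e : EdgeIdx n, ((t ≤ e.1.1.val ∧ e.1.1.val < t + M) ∨ (t ≤ e.1.2.val ∧ e.1.2.val < t + M)) →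
    (ω e = true ↔ (t ≤ e.1.1.val ∧ e.1.2.val < t + M ∧ U (e.1.1.val - t) (e.1.2.val - t)))

def Supp (p : ℕ → ℝ) {n : ℕ} (ω : Sample n) : Prop :=
  ∀ e : EdgeIdx n, ω e = true → p (e.1.2.val - e.1.1.val) ≠ 0

theorem adjVal_lt {n : ℕ} (ω : Sample n) {x y : ℕ} (hxy : x < y) (hy : y < n) :
    adjVal ω x y ↔ ω ⟨(⟨x, hxy.trans hy⟩, ⟨y, hy⟩), hxy⟩ = true := by
  constructor
  · rintro ⟨⟨⟨⟨a, ha⟩, ⟨b, hb⟩⟩, hab⟩, he, h⟩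
    simp only [Fin.lt_def] at hab h
    rcases h with ⟨rfl, rfl⟩ | ⟨rfl, rfl⟩
    · exact he
    · omega
  · intro h
    exact ⟨_, h, Or.inl ⟨rfl, rfl⟩⟩

theorem exists_decomp {p : ℕ → ℝ} {k L D : ℕ} {A : Fin L → Set ℕ} {R : Fin L → ℕ → ℕ → Prop}
    (hA : ∀ q, Poss p (A q) (R q)) (hD : ∀ q, ∀ x ∈ A q, x < D) {n : ℕ} (ω : Sample n)
    (hω : Supp p ω) (t : ℕ) (ht : t + L * D ≤ n) (hI : Iso ω (L * D) (Rst D A R) t) :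
    ∃ X : Option (Fin L) → Set ℕ, (⋃ i, X i) = {x | x < n} ∧
      (∀ i i' x, x ∈ X i → x ∈ X i' → i = i') ∧
      (∀ i i' x x', x ∈ X i → x' ∈ X i' → adjVal ω x x' → i = i') ∧
      (∀ q, ty0 (X (some q)) (adjVal ω) k = ty0 (A q) (R q) k) ∧
      Poss p (X none) (adjVal ω) := by
  let φ : Fin L → ℕ → ℕ := fun q x => t + (q * D + x)
  let B : Set ℕ := ⋃ q, φ q '' A q
  let X : Option (Fin L) → Set ℕ := fun i => match i with
    | none => {x | x < n} \ B
    | some q => φ q '' A q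
  have hblk : ∀ (q : Fin L), ∀ u ∈ A q, q * D + u < L * D := by
    intro q u hu
    have h1 := hD q u hu
    have h2 : (q.val + 1) * D ≤ L * D := Nat.mul_le_mul_right _ q.2
    rw [Nat.add_mul] at h2
    omega
  have huniq : ∀ (q q' : Fin L), ∀ u ∈ A q, ∀ u' ∈ A q', q * D + u = q' * D + u' →
      q = q' ∧ u = u' := by
    intro q q' u hu u' hu' h
    have h1 := hD q u hu
    have h2 := hD q' u' hu'
    have hq : q.val = q'.val := by
      have a1 : (q * D + u) / D = q.val := by
        rw [mul_comm, Nat.mul_add_div (by omega), Nat.div_eq_of_lt h1]; rfl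
      have a2 : (q' * D + u') / D = q'.val := by
        rw [mul_comm, Nat.mul_add_div (by omega), Nat.div_eq_of_lt h2]; rfl
      rw [← a1, ← a2, h]
    have : q = q' := Fin.ext hq
    subst this
    exact ⟨rfl, by omega⟩
  have hsub : ∀ i x, x ∈ X i → x < n := by
    rintro (_ | q) x hx
    · exact hx.1
    · obtain ⟨u, hu, rfl⟩ := hx
      have := hblk q u hu
      simp only [φ]; omega
  have hdis : ∀ i i' x, x ∈ X i → x ∈ X i' → i = i' := by
    rintro (_ | q) (_ | q') x hx hx'
    · rfl
    · exact absurd (Set.mem_iUnion.2 ⟨q', hx'⟩) hx.2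
    · exact absurd (Set.mem_iUnion.2 ⟨q, hx⟩) hx'.2
    · obtain ⟨u, hu, rfl⟩ := hx
      obtain ⟨u', hu', h⟩ := hx'
      have := huniq q q' u hu u' hu' (by simp only [φ] at h; omega)
      rw [this.1]
  have hblk' : ∀ q x, x ∈ X (some q) → t ≤ x ∧ x < t + L * D := by
    rintro q x ⟨u, hu, rfl⟩
    have := hblk q u hu
    simp only [φ]; omega
  have hedge : ∀ i i' x x', x < x' → x ∈ X i → x' ∈ X i' → adjVal ω x x' → i = i' := by
    intro i i' x x' hlt hx hx' hadj
    by_cases hn : i = none ∧ i' = none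
    · rw [hn.1, hn.2]
    have hx'n := hsub _ _ hx'
    rw [adjVal_lt ω hlt hx'n] at hadj
    have hb : (t ≤ x ∧ x < t + L * D) ∨ (t ≤ x' ∧ x' < t + L * D) := by
      rcases i with _ | q
      · rcases i' with _ | q'
        · simp at hn
        · exact Or.inr (hblk' _ _ hx')
      · exact Or.inl (hblk' _ _ hx)
    obtain ⟨h1, h2, q, u, hu, v, hv, e1, e2, -⟩ := (hI _ hb).1 hadj
    simp only at h1 e1 e2
    have m1 : x ∈ X (some q) := ⟨u, hu, by simp only [φ]; omega⟩
    have m2 : x' ∈ X (some q) := ⟨v, hv, by simp only [φ]; omega⟩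
    rw [hdis i (some q) x hx m1, hdis i' (some q) x' hx' m2]
  have hR : ∀ q, ∀ u ∈ A q, ∀ v ∈ A q, u < v →
      (adjVal ω (φ q u) (φ q v) ↔ R q u v) := by
    intro q u hu v hv huv
    have h1 := hblk q u hu
    have h2 := hblk q v hv
    rw [adjVal_lt ω (by simp only [φ]; omega) (by simp only [φ]; omega), hI _ (by
      left; simp only [φ]; omega)]
    simp only [φ, Nat.add_sub_cancel_left]
    constructor
    · rintro ⟨-, -, q', u', hu', v', hv', e1, e2, h⟩
      obtain ⟨rfl, rfl⟩ := huniq _ _ _ hu _ hu' e1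
      obtain ⟨-, rfl⟩ := huniq _ _ _ hv _ hv' e2
      exact h
    · intro h
      exact ⟨by omega, by omega, q, u, hu, v, hv, rfl, rfl, h⟩
  refine ⟨X, ?_, hdis, ?_, ?_, ?_⟩
  · ext x
    rw [Set.mem_iUnion]
    constructor
    · rintro ⟨i, hi⟩; exact hsub i x hi
    · intro hx
      by_cases hB : x ∈ B
      · obtain ⟨q, hq⟩ := Set.mem_iUnion.1 hB
        exact ⟨some q, hq⟩
      · exact ⟨none, hx, hB⟩
  · intro i i' x x' hx hx' hadj
    rcases lt_trichotomy x x' with h | h | h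
    · exact hedge _ _ _ _ h hx hx' hadj
    · subst h; exact absurd hadj adjVal_irrefl
    · exact (hedge _ _ _ _ h hx' hx (adjVal_symm hadj)).symm
  · intro q
    refine ty0_image (φ q) ?_ rfl ?_ k
    · intro u v h; simp only [φ] at h; omega
    · intro u hu v hv
      rcases lt_trichotomy u v with h | h | h
      · exact hR q u hu v hv h
      · subst h
        exact iff_of_false adjVal_irrefl ((hA q).2.2.1 u hu)
      · constructor
        · intro h'
          exact (hA q).2.1 _ hv _ hu ((hR q v hv u hu h).1 (adjVal_symm h'))
        · intro h'
          exact adjVal_symm ((hR q v hv u hu h).2 ((hA q).2.1 _ hu _ hv h'))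
  · refine ⟨(Set.finite_lt_nat n).subset (fun x hx => hx.1), fun x _ y _ h => adjVal_symm h,
      fun x _ => adjVal_irrefl, fun x _ y hy hxy h => ?_⟩
    exact hω _ ((adjVal_lt ω hxy hy.1).1 h)

theorem BF_good {p : ℕ → ℝ} {k L D : ℕ} {A : Fin L → Set ℕ} {R : Fin L → ℕ → ℕ → Prop}
    (hA : ∀ q, Poss p (A q) (R q)) (hD : ∀ q, ∀ x ∈ A q, x < D)
    (hrep : ∀ X r, Poss p X r →
      ∃ Q : Finset (Fin L), k ≤ Q.card ∧ ∀ q ∈ Q, ty0 (A q) (R q) k = ty0 X r k)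
    {n n' : ℕ} (ω : Sample n) (ω' : Sample n') (hω : Supp p ω) (hω' : Supp p ω')
    (h : ∃ t, t + L * D ≤ n ∧ Iso ω (L * D) (Rst D A R) t)
    (h' : ∃ t, t + L * D ≤ n' ∧ Iso ω' (L * D) (Rst D A R) t) :
    BF {x | x < n} {x | x < n'} (adjVal ω) (adjVal ω') k ∅ := by
  classical
  obtain ⟨t, ht, hI⟩ := h
  obtain ⟨t', ht', hI'⟩ := h'
  obtain ⟨X, hX1, hX2, hX3, hX4, hX5⟩ := exists_decomp (k := k) hA hD ω hω t ht hI
  obtain ⟨Y, hY1, hY2, hY3, hY4, hY5⟩ := exists_decomp (k := k) hA hD ω' hω' t' ht' hI'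
  have key : ∀ (X : Option (Fin L) → Set ℕ) (r : ℕ → ℕ → Prop),
      (∀ q, ty0 (X (some q)) r k = ty0 (A q) (R q) k) → Poss p (X none) r →
      ∀ i, ∃ Q : Finset (Fin L), k ≤ Q.card ∧ ∀ q ∈ Q, ty0 (A q) (R q) k = ty0 (X i) r k := by
    intro X r h1 h2 i
    rcases i with _ | q
    · exact hrep _ _ h2
    · obtain ⟨Q, hQ, h⟩ := hrep _ _ (hA q)
      exact ⟨Q, hQ, fun q' hq' => (h q' hq').trans (h1 q).symm⟩
  rw [← hX1, ← hY1]
  refine BF_comp X Y _ _ hX2 hY2 hX3 hY3 k ?_ ?_ k ∅ ∅ (fun _ => ∅) (by simp) (by simp) (by simp)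
    (by simp) (by simp)
  · intro i
    obtain ⟨Q, hQ, h⟩ := key X _ hX4 hX5 i
    refine ⟨Q.map Function.Embedding.some, by simpa using hQ, ?_⟩
    intro j hj
    obtain ⟨q, hq, rfl⟩ := Finset.mem_map.1 hj
    exact BF_of_ty0 ((hY4 q).trans (h q hq)).symm
  · intro j
    obtain ⟨Q, hQ, h⟩ := key Y _ hY4 hY5 j
    refine ⟨Q.map Function.Embedding.some, by simpa using hQ, ?_⟩
    intro i hi
    obtain ⟨q, hq, rfl⟩ := Finset.mem_map.1 hi
    exact BF_of_ty0 ((hX4 q).trans (h q hq))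

/-! ### Product measures on finite cubes -/

section cube

variable {ι : Type} [Fintype ι] [DecidableEq ι]

open scoped Classical in
noncomputable def PP (w : ι → Bool → ℝ) (E : (ι → Bool) → Prop) : ℝ :=
  ∑ ω : ι → Bool, if E ω then ∏ e, w e (ω e) else 0

theorem PP_true (w : ι → Bool → ℝ) (hw : ∀ e, w e true + w e false = 1) :
    PP w (fun _ => True) = 1 := by
  have h := Finset.prod_univ_sum (fun _ : ι => (Finset.univ : Finset Bool)) w
  rw [Fintype.piFinset_univ] at h
  simp only [PP, if_true]
  rw [← h]
  exact Finset.prod_eq_one fun e _ => by simpa using hw e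

theorem PP_congr (w : ι → Bool → ℝ) {E F : (ι → Bool) → Prop} (h : ∀ ω, E ω ↔ F ω) :
    PP w E = PP w F := by
  have : E = F := funext fun ω => propext (h ω)
  rw [this]

theorem PP_mono (w : ι → Bool → ℝ) (h0 : ∀ e b, 0 ≤ w e b) {E F : (ι → Bool) → Prop}
    (h : ∀ ω, ∏ e, w e (ω e) ≠ 0 → E ω → F ω) : PP w E ≤ PP w F := by
  classical
  refine Finset.sum_le_sum fun ω _ => ?_
  have hn : 0 ≤ ∏ e, w e (ω e) := Finset.prod_nonneg fun e _ => h0 e _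
  by_cases hz : ∏ e, w e (ω e) = 0
  · simp [hz]
  · by_cases hE : E ω
    · simp [hE, h ω hz hE]
    · simp only [hE, if_false]
      split_ifs
      · exact hn
      · exact le_rfl

theorem PP_split (w : ι → Bool → ℝ) (E F : (ι → Bool) → Prop) :
    PP w F = PP w (fun ω => E ω ∧ F ω) + PP w (fun ω => ¬ E ω ∧ F ω) := by
  classical
  unfold PP
  rw [← Finset.sum_add_distrib]
  refine Finset.sum_congr rfl fun ω _ => ?_
  by_cases hE : E ω <;> by_cases hF : F ω <;> simp [hE, hF]

theorem PP_single (w : ι → Bool → ℝ) (hw : ∀ e, w e true + w e false = 1) (e : ι) (b : Bool)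
    (F : (ι → Bool) → Prop) (hF : ∀ ω c, F (Function.update ω e c) ↔ F ω) :
    PP w (fun ω => ω e = b ∧ F ω) = w e b * PP w F := by
  classical
  have hflip : w e (!b) * PP w (fun ω => ω e = b ∧ F ω) =
      w e b * PP w (fun ω => ¬ ω e = b ∧ F ω) := by
    unfold PP
    rw [Finset.mul_sum, Finset.mul_sum]
    refine Finset.sum_bij' (fun ω _ => Function.update ω e (!(ω e)))
      (fun ω _ => Function.update ω e (!(ω e))) (by simp) (by simp) ?_ ?_ ?_
    · intro ω _; simp
    · intro ω _; simp
    · intro ω _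
      have hF' := hF ω (!(ω e))
      by_cases hb : ω e = b
      · by_cases hf : F ω
        · have hf' : F (Function.update ω e (!(ω e))) := hF'.2 hf
          rw [if_pos ⟨hb, hf⟩, if_pos ⟨by simp [hb], hf'⟩]
          rw [← Finset.mul_prod_erase Finset.univ _ (Finset.mem_univ e),
            ← Finset.mul_prod_erase Finset.univ _ (Finset.mem_univ e)]
          have : ∏ x ∈ Finset.univ.erase e, w x (Function.update ω e (!(ω e)) x) =
              ∏ x ∈ Finset.univ.erase e, w x (ω x) := by
            refine Finset.prod_congr rfl fun x hx => ?_
            rw [Function.update_of_ne (Finset.ne_of_mem_erase hx)]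
          rw [this, Function.update_self, hb]
          ring
        · have hf' : ¬ F (Function.update ω e (!(ω e))) := fun h => hf (hF'.1 h)
          simp [hf, hf']
      · have : (!(ω e)) = b := by
          cases h : ω e <;> cases b <;> simp_all
        simp [hb, this]
  have hs : w e b + w e (!b) = 1 := by
    cases b
    · simpa [add_comm] using hw e
    · simpa using hw e
  have h1 := PP_split w (fun ω => ω e = b) F
  calc PP w (fun ω => ω e = b ∧ F ω)
      = (w e b + w e (!b)) * PP w (fun ω => ω e = b ∧ F ω) := by rw [hs, one_mul]
    _ = w e b * PP w (fun ω => ω e = b ∧ F ω) + w e b * PP w (fun ω => ¬ ω e = b ∧ F ω) := by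
        rw [add_mul, hflip]
    _ = w e b * PP w F := by rw [h1]; ring

theorem PP_cyl (w : ι → Bool → ℝ) (hw : ∀ e, w e true + w e false = 1) (d : ι → Bool)
    (F : (ι → Bool) → Prop) (S : Finset ι)
    (hF : ∀ e ∈ S, ∀ ω c, F (Function.update ω e c) ↔ F ω) :
    PP w (fun ω => (∀ e ∈ S, ω e = d e) ∧ F ω) = (∏ e ∈ S, w e (d e)) * PP w F := by
  induction S using Finset.induction_on with
  | empty => simp
  | insert e S he ih =>
    rw [Finset.prod_insert he, mul_assoc, ← ih fun e' he' => hF e' (Finset.mem_insert_of_mem he'),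
      ← PP_single w hw]
    · refine PP_congr w fun ω => ?_
      simp [and_assoc]
    · intro ω c
      rw [hF e (Finset.mem_insert_self _ _)]
      refine and_congr_left fun _ => ?_
      refine forall₂_congr fun x hx => ?_
      rw [Function.update_of_ne (fun h : x = e => he (h ▸ hx))]

theorem PP_none (w : ι → Bool → ℝ) (hw : ∀ e, w e true + w e false = 1) {τ : Type}
    [DecidableEq τ] (d : τ → ι → Bool) (S : τ → Finset ι) (T : Finset τ)
    (hd : ∀ s ∈ T, ∀ t ∈ T, s ≠ t → ∀ e ∈ S s, e ∉ S t) :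
    PP w (fun ω => ∀ t ∈ T, ¬ ∀ e ∈ S t, ω e = d t e) =
      ∏ t ∈ T, (1 - ∏ e ∈ S t, w e (d t e)) := by
  induction T using Finset.induction_on with
  | empty => simpa using PP_true w hw
  | insert t T ht ih =>
    have ih' := ih fun a ha b hb => hd a (Finset.mem_insert_of_mem ha) b (Finset.mem_insert_of_mem hb)
    rw [Finset.prod_insert ht, ← ih']
    have hsp := PP_split w (fun ω => ∀ e ∈ S t, ω e = d t e)
      (fun ω => ∀ t ∈ T, ¬ ∀ e ∈ S t, ω e = d t e)
    rw [PP_cyl w hw] at hsp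
    · have : PP w (fun ω => ∀ t' ∈ insert t T, ¬ ∀ e ∈ S t', ω e = d t' e) =
          PP w (fun ω => (¬ ∀ e ∈ S t, ω e = d t e) ∧ ∀ t ∈ T, ¬ ∀ e ∈ S t, ω e = d t e) := by
        refine PP_congr w fun ω => ?_
        rw [Finset.forall_mem_insert]
      rw [this]
      linarith
    · intro e he ω c
      refine forall₂_congr fun s hs => not_congr (forall₂_congr fun x hx => ?_)
      rw [Function.update_of_ne]
      rintro rfl
      exact hd t (Finset.mem_insert_self _ _) s (Finset.mem_insert_of_mem hs)
        (fun h => ht (h ▸ hs)) x he hx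

end cube

theorem prod_ge_of_inj {ι κ : Type} [DecidableEq κ] (S : Finset ι) (T : Finset κ) (φ : ι → κ)
    (hφ : Set.InjOn φ S) (hm : ∀ e ∈ S, φ e ∈ T) (f : κ → ℝ) (h0 : ∀ x ∈ T, 0 ≤ f x)
    (h1 : ∀ x ∈ T, f x ≤ 1) : ∏ x ∈ T, f x ≤ ∏ e ∈ S, f (φ e) := by
  rw [← Finset.prod_image (s := S) (g := φ) (f := f) hφ]
  have hsub : S.image φ ⊆ T := Finset.image_subset_iff.2 hm
  rw [← Finset.prod_sdiff hsub]
  have : ∏ x ∈ T \ S.image φ, f x ≤ 1 :=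
    Finset.prod_le_one (fun x hx => h0 x (Finset.sdiff_subset hx))
      (fun x hx => h1 x (Finset.sdiff_subset hx))
  exact mul_le_of_le_one_left (Finset.prod_nonneg fun x hx => h0 x (hsub hx)) this

/-- The weights of the random graph. -/
noncomputable def wt (p : ℕ → ℝ) (n : ℕ) (e : EdgeIdx n) (b : Bool) : ℝ :=
  if b then p (e.1.2.val - e.1.1.val) else 1 - p (e.1.2.val - e.1.1.val)

theorem Pr_eq_PP (p : ℕ → ℝ) (n : ℕ) (E : Sample n → Prop) : Pr p n E = PP (wt p n) E := by
  unfold Pr PP sampleWeight wt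
  rfl

theorem edge_pos {n : ℕ} (e : EdgeIdx n) : 1 ≤ e.1.2.val - e.1.1.val := by
  have := e.2
  rw [Fin.lt_def] at this
  omega

theorem wt_nonneg {p : ℕ → ℝ} (hp : ∀ j, 1 ≤ j → 0 ≤ p j ∧ p j < 1) (n : ℕ) (e : EdgeIdx n)
    (b : Bool) : 0 ≤ wt p n e b := by
  have := hp _ (edge_pos e)
  cases b <;> simp [wt] <;> linarith

theorem wt_sum (p : ℕ → ℝ) (n : ℕ) (e : EdgeIdx n) : wt p n e true + wt p n e false = 1 := by
  simp [wt]

theorem supp_of_ne {p : ℕ → ℝ} {n : ℕ} {ω : Sample n} (h : ∏ e, wt p n e (ω e) ≠ 0) :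
    Supp p ω := by
  intro e he h0
  apply h
  apply Finset.prod_eq_zero (Finset.mem_univ e)
  simp [wt, he, h0]

/-- the edge `e` meets the interval `[t, t+M)` -/
def Inc {n : ℕ} (M t : ℕ) (e : EdgeIdx n) : Prop :=
  (t ≤ e.1.1.val ∧ e.1.1.val < t + M) ∨ (t ≤ e.1.2.val ∧ e.1.2.val < t + M)

def Des {n : ℕ} (M : ℕ) (U : ℕ → ℕ → Prop) (t : ℕ) (e : EdgeIdx n) : Prop :=
  t ≤ e.1.1.val ∧ e.1.2.val < t + M ∧ U (e.1.1.val - t) (e.1.2.val - t)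

theorem edge_ext {n : ℕ} {e e' : EdgeIdx n} (h1 : e.1.1.val = e'.1.1.val)
    (h2 : e.1.2.val = e'.1.2.val) : e = e' :=
  Subtype.ext (Prod.ext (Fin.ext h1) (Fin.ext h2))

open scoped Classical in
theorem cyl_lower {p : ℕ → ℝ} (hp : ∀ j, 1 ≤ j → 0 ≤ p j ∧ p j < 1) (M : ℕ)
    (U : ℕ → ℕ → Prop) (n t : ℕ) (S : Finset (EdgeIdx n)) (hS : ∀ e ∈ S, Inc M t e) :
    (∏ x ∈ Finset.range M ×ˢ Finset.range M,
        if x.1 < x.2 ∧ U x.1 x.2 then p (x.2 - x.1) else 1) *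
      (∏ j ∈ Finset.Icc 1 n, (1 - p j)) ^ (2 * M) ≤
      ∏ e ∈ S, wt p n e (decide (Des M U t e)) := by
  set Q := ∏ j ∈ Finset.Icc 1 n, (1 - p j) with hQ
  have hpe : ∀ e : EdgeIdx n, 0 ≤ p (e.1.2.val - e.1.1.val) ∧ p (e.1.2.val - e.1.1.val) < 1 :=
    fun e => hp _ (edge_pos e)
  have hQ0 : 0 ≤ Q := Finset.prod_nonneg fun j hj => by
    have := hp j (Finset.mem_Icc.1 hj).1; linarith
  have hQM : ∀ t : ℕ, ∏ x ∈ Finset.Ico t (t + M) ×ˢ Finset.Icc 1 n, (1 - p x.2) = Q ^ M := by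
    intro t
    rw [Finset.prod_product]
    simp [hQ]
  have hstep : ∀ (S' : Finset (EdgeIdx n)) (h : EdgeIdx n → ℕ),
      (∀ e ∈ S', t ≤ h e ∧ h e < t + M) →
      (∀ e ∈ S', ∀ e' ∈ S', h e = h e' →
        e.1.2.val - e.1.1.val = e'.1.2.val - e'.1.1.val → e = e') →
      Q ^ M ≤ ∏ e ∈ S', (1 - p (e.1.2.val - e.1.1.val)) := by
    intro S' h h1 h2
    rw [← hQM t]
    refine prod_ge_of_inj S' _ (fun e => (h e, e.1.2.val - e.1.1.val)) ?_ ?_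
      (fun x => 1 - p x.2) ?_ ?_
    · intro e he e' he' hee
      simp only [Prod.mk.injEq] at hee
      exact h2 e he e' he' hee.1 hee.2
    · intro e he
      have := edge_pos e
      have h3 := e.1.2.2
      have := h1 e he
      simp only [Finset.mem_product, Finset.mem_Ico, Finset.mem_Icc]
      omega
    · intro x hx
      have := hp x.2 (Finset.mem_Icc.1 (Finset.mem_product.1 hx).2).1; linarith
    · intro x hx
      have := hp x.2 (Finset.mem_Icc.1 (Finset.mem_product.1 hx).2).1; linarith
  have hA : Q ^ (2 * M) ≤ ∏ e ∈ S, (1 - p (e.1.2.val - e.1.1.val)) := by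
    set S1 := S.filter fun e => t ≤ e.1.1.val ∧ e.1.1.val < t + M
    set S2 := S.filter fun e => t ≤ e.1.2.val ∧ e.1.2.val < t + M
    have hun : S1 ∪ S2 = S := by
      rw [← Finset.filter_or]
      exact Finset.filter_true_of_mem hS
    have h1 : Q ^ M ≤ ∏ e ∈ S1, (1 - p (e.1.2.val - e.1.1.val)) := by
      refine hstep S1 (fun e => e.1.1.val) (fun e he => (Finset.mem_filter.1 he).2) ?_
      intro e _ e' _ h h'
      have := e.2; have := e'.2
      rw [Fin.lt_def] at *
      exact edge_ext h (by omega)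
    have h2 : Q ^ M ≤ ∏ e ∈ S2, (1 - p (e.1.2.val - e.1.1.val)) := by
      refine hstep S2 (fun e => e.1.2.val) (fun e he => (Finset.mem_filter.1 he).2) ?_
      intro e _ e' _ h h'
      have := e.2; have := e'.2
      rw [Fin.lt_def] at *
      exact edge_ext (by omega) h
    have h3 := Finset.prod_union_inter (s₁ := S1) (s₂ := S2)
      (f := fun e : EdgeIdx n => (1 - p (e.1.2.val - e.1.1.val)))
    rw [hun] at h3
    have h4 : ∏ e ∈ S1 ∩ S2, (1 - p (e.1.2.val - e.1.1.val)) ≤ 1 :=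
      Finset.prod_le_one (fun e _ => by have := hpe e; linarith)
        (fun e _ => by have := hpe e; linarith)
    have h5 : 0 ≤ ∏ e ∈ S, (1 - p (e.1.2.val - e.1.1.val)) :=
      Finset.prod_nonneg (fun e _ => by have := hpe e; linarith)
    calc Q ^ (2 * M) = Q ^ M * Q ^ M := by rw [two_mul, pow_add]
      _ ≤ _ := mul_le_mul h1 h2 (pow_nonneg hQ0 _) ((pow_nonneg hQ0 _).trans h1)
      _ = _ := h3.symm
      _ ≤ _ := mul_le_of_le_one_right h5 h4
  have hB : (∏ x ∈ Finset.range M ×ˢ Finset.range M,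
        if x.1 < x.2 ∧ U x.1 x.2 then p (x.2 - x.1) else 1) ≤
      ∏ e ∈ S, (if Des M U t e then p (e.1.2.val - e.1.1.val) else 1) := by
    rw [← Finset.prod_filter (s := S)]
    refine (prod_ge_of_inj (S.filter fun e => Des M U t e) _
      (fun e => (e.1.1.val - t, e.1.2.val - t)) ?_ ?_
      (fun x : ℕ × ℕ => if x.1 < x.2 ∧ U x.1 x.2 then p (x.2 - x.1) else 1) ?_ ?_).trans
        (le_of_eq (Finset.prod_congr rfl ?_))
    · intro e he e' he' h
      have h1 := (Finset.mem_filter.1 he).2.1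
      have h2 := (Finset.mem_filter.1 he').2.1
      have := e.2; have := e'.2
      rw [Fin.lt_def] at *
      simp only [Prod.mk.injEq] at h
      exact edge_ext (by omega) (by omega)
    · intro e he
      have h1 := (Finset.mem_filter.1 he).2.1
      have h2 := (Finset.mem_filter.1 he).2.2.1
      have := e.2
      rw [Fin.lt_def] at this
      simp only [Finset.mem_product, Finset.mem_range]
      omega
    · intro x _
      split_ifs with h
      · exact (hp _ (by omega)).1
      · exact zero_le_one
    · intro x _
      split_ifs with h
      · exact (hp _ (by omega)).2.le
      · exact le_rfl
    · intro e he
      have h1 := (Finset.mem_filter.1 he).2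
      have h2 := h1.1
      have := e.2
      rw [Fin.lt_def] at this
      simp only
      rw [if_pos ⟨by omega, h1.2.2⟩]
      congr 1
      omega
  calc _ ≤ (∏ e ∈ S, (if Des M U t e then p (e.1.2.val - e.1.1.val) else 1)) *
        ∏ e ∈ S, (1 - p (e.1.2.val - e.1.1.val)) := by
        refine mul_le_mul hB hA (pow_nonneg hQ0 _) (Finset.prod_nonneg fun e _ => ?_)
        split_ifs
        · exact (hpe e).1
        · exact zero_le_one
    _ = ∏ e ∈ S, ((if Des M U t e then p (e.1.2.val - e.1.1.val) else 1) *
        (1 - p (e.1.2.val - e.1.1.val))) := Finset.prod_mul_distrib.symm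
    _ ≤ _ := by
        refine Finset.prod_le_prod (fun e _ => ?_) (fun e _ => ?_)
        · have := hpe e
          split_ifs
          · exact mul_nonneg this.1 (by linarith)
          · linarith
        · have := hpe e
          by_cases h : Des M U t e
          · simp only [h, if_true, wt, decide_true]
            nlinarith
          · simp [h, wt]

open scoped Classical in
theorem good_lower {p : ℕ → ℝ} (hp : ∀ j, 1 ≤ j → 0 ≤ p j ∧ p j < 1) (M : ℕ)
    (U : ℕ → ℕ → Prop) (hU : ∀ x y, x < y → U x y → p (y - x) ≠ 0) :
    ∃ c : ℝ, 0 < c ∧ c ≤ 1 ∧ ∀ (n : ℕ) (T : Finset ℕ), (∀ t ∈ T, t + M ≤ n) →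
      (∀ s ∈ T, ∀ t ∈ T, s ≠ t → ∀ e : EdgeIdx n, p (e.1.2.val - e.1.1.val) ≠ 0 →
        Inc M s e → ¬ Inc M t e) →
      1 - (1 - c * (∏ j ∈ Finset.Icc 1 n, (1 - p j)) ^ (2 * M)) ^ T.card ≤
        Pr p n (fun ω => Supp p ω ∧ ∃ t, t + M ≤ n ∧ Iso ω M U t) := by
  refine ⟨∏ x ∈ Finset.range M ×ˢ Finset.range M,
        if x.1 < x.2 ∧ U x.1 x.2 then p (x.2 - x.1) else 1, ?_, ?_, ?_⟩
  · refine Finset.prod_pos fun x _ => ?_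
    split_ifs with h
    · exact lt_of_le_of_ne (hp _ (by omega)).1 (hU _ _ h.1 h.2).symm
    · exact zero_lt_one
  · refine Finset.prod_le_one (fun x _ => ?_) (fun x _ => ?_)
    · split_ifs with h
      · exact (hp _ (by omega)).1
      · exact zero_le_one
    · split_ifs with h
      · exact (hp _ (by omega)).2.le
      · exact le_rfl
  intro n T hT hdis
  let S : ℕ → Finset (EdgeIdx n) := fun t =>
    Finset.univ.filter fun e => Inc M t e ∧ p (e.1.2.val - e.1.1.val) ≠ 0
  let d : ℕ → EdgeIdx n → Bool := fun t e => decide (Des M U t e)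
  have hnone := PP_none (wt p n) (wt_sum p n) d S T (by
    intro s hs t ht hst e he he'
    simp only [S, Finset.mem_filter, Finset.mem_univ, true_and] at he he'
    exact hdis s hs t ht hst e he.2 he.1 he'.1)
  have hle : ∏ t ∈ T, (1 - ∏ e ∈ S t, wt p n e (d t e)) ≤
      (1 - (∏ x ∈ Finset.range M ×ˢ Finset.range M,
        if x.1 < x.2 ∧ U x.1 x.2 then p (x.2 - x.1) else 1) *
        (∏ j ∈ Finset.Icc 1 n, (1 - p j)) ^ (2 * M)) ^ T.card := by
    refine (Finset.prod_le_prod ?_ ?_).trans_eq (Finset.prod_const _)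
    · intro t _
      rw [sub_nonneg]
      refine Finset.prod_le_one (fun e _ => wt_nonneg hp n e _) (fun e _ => ?_)
      have := hp _ (edge_pos e)
      unfold wt
      split_ifs <;> linarith
    · intro t _
      have := cyl_lower hp M U n t (S t) (fun e he => (Finset.mem_filter.1 he).2.1)
      simp only [d]
      linarith
  have hsplit := PP_split (wt p n) (fun ω => ∀ t ∈ T, ¬ ∀ e ∈ S t, ω e = d t e) (fun _ => True)
  rw [PP_true _ (wt_sum p n)] at hsplit
  simp only [and_true] at hsplit
  rw [hnone] at hsplit
  rw [Pr_eq_PP]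
  have hmono : PP (wt p n) (fun ω => ¬ ∀ t ∈ T, ¬ ∀ e ∈ S t, ω e = d t e) ≤
      PP (wt p n) (fun ω => Supp p ω ∧ ∃ t, t + M ≤ n ∧ Iso ω M U t) := by
    refine PP_mono _ (wt_nonneg hp n) fun ω hω h => ?_
    have hs := supp_of_ne hω
    push Not at h
    obtain ⟨t, ht, h⟩ := h
    refine ⟨hs, t, hT t ht, fun e he => ?_⟩
    by_cases hpe : p (e.1.2.val - e.1.1.val) = 0
    · refine iff_of_false (fun h' => hs e h' hpe) ?_
      rintro ⟨h1, h2, h3⟩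
      have hlt := e.2
      rw [Fin.lt_def] at hlt
      refine hU _ _ (by omega) h3 ?_
      rw [← hpe]; congr 1; omega
    · have := h e (by simp only [S, Finset.mem_filter, Finset.mem_univ, true_and]; exact ⟨he, hpe⟩)
      rw [this]
      simp only [d, decide_eq_true_eq]
      rfl
  linarith

/-- Greedy choice of many translates with no relevant differences between them. -/
theorem exists_translates (g : ℕ → ℕ) (K M n : ℕ) (N : ℕ)
    (hn : N * (M * M * (K + 1) * 2 + 1) + M ≤ n) :
    ∃ T : Finset ℕ, T.card = N ∧ (∀ t ∈ T, t + M ≤ n) ∧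
      ∀ s ∈ T, ∀ t ∈ T, s ≠ t → ∀ i, 1 ≤ i → i ≤ K →
        (∀ x, x < M → ∀ y, y < M → s + x ≠ t + y ∧ t + y ≠ s + x) ∧
        (∀ x, x < M → ∀ y, y < M → s + x + g i ≠ t + y ∧ t + y + g i ≠ s + x) := by
  classical
  let h : ℕ → ℕ := fun i => if i = 0 then 0 else g i
  induction N with
  | zero => exact ⟨∅, by simp⟩
  | succ N ih =>
    obtain ⟨T, hc, hT, hd⟩ := ih (by nlinarith)
    let B : Finset ℕ := (T ×ˢ ((Finset.range M ×ˢ Finset.range M) ×ˢ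
      Finset.range (K + 1)) ×ˢ (Finset.univ : Finset Bool)).image
      fun z => if z.2.2 then z.1 + z.2.1.1.1 + h z.2.1.2 - z.2.1.1.2
        else z.1 + z.2.1.1.1 - h z.2.1.2 - z.2.1.1.2
    have hB : B.card ≤ N * (M * M * (K + 1) * 2) := by
      refine Finset.card_image_le.trans (le_of_eq ?_)
      simp only [Finset.card_product, Finset.card_range, Finset.card_univ, Fintype.card_bool, hc]
    have hBT : (B ∪ T).card < (Finset.range (n - M + 1)).card := by
      refine lt_of_le_of_lt (Finset.card_union_le _ _) ?_
      rw [Finset.card_range, hc]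
      have : N * (M * M * (K + 1) * 2 + 1) = N * (M * M * (K + 1) * 2) + N := by ring
      have h2 : (N + 1) * (M * M * (K + 1) * 2 + 1) =
        N * (M * M * (K + 1) * 2 + 1) + (M * M * (K + 1) * 2 + 1) := by ring
      omega
    obtain ⟨s, hs, hsB⟩ := Finset.exists_mem_notMem_of_card_lt_card hBT
    rw [Finset.mem_range] at hs
    rw [Finset.mem_union, not_or] at hsB
    have hmem : ∀ t ∈ T, ∀ x, x < M → ∀ y, y < M → ∀ i, i ≤ K →
        s + x + h i ≠ t + y ∧ t + y + h i ≠ s + x := by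
      intro t ht x hx y hy i hi
      constructor
      · intro e
        apply hsB.1
        refine Finset.mem_image.2 ⟨(t, ((y, x), i), false), ?_, ?_⟩
        · simp only [Finset.mem_product, Finset.mem_range, Finset.mem_univ, and_true]
          exact ⟨ht, ⟨hy, hx⟩, by omega⟩
        · simp only [Bool.false_eq_true, if_false]
          show t + y - h i - x = s
          generalize h i = z at e ⊢
          omega
      · intro e
        apply hsB.1
        refine Finset.mem_image.2 ⟨(t, ((y, x), i), true), ?_, ?_⟩
        · simp only [Finset.mem_product, Finset.mem_range, Finset.mem_univ, and_true]
          exact ⟨ht, ⟨hy, hx⟩, by omega⟩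
        · simp only [if_true]
          show t + y + h i - x = s
          generalize h i = z at e ⊢
          omega
    have h0 : h 0 = 0 := by simp [h]
    have hg : ∀ i, 1 ≤ i → h i = g i := fun i hi => by simp [h]; omega
    have hMn : M ≤ n := le_trans (Nat.le_add_left _ _) hn
    refine ⟨insert s T, by rw [Finset.card_insert_of_notMem hsB.2, hc], ?_, ?_⟩
    · intro t ht
      rcases Finset.mem_insert.1 ht with rfl | ht
      · omega
      · exact hT t ht
    · intro u hu t ht hut i hi hiK
      rcases Finset.mem_insert.1 hu with rfl | hu' <;> rcases Finset.mem_insert.1 ht with rfl | ht'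
      · exact absurd rfl hut
      · refine ⟨fun x hx y hy => ?_, fun x hx y hy => ?_⟩
        · have := hmem t ht' x hx y hy 0 (by omega)
          rw [h0] at this
          omega
        · have := hmem t ht' x hx y hy i hiK
          rw [hg i hi] at this
          omega
      · refine ⟨fun x hx y hy => ?_, fun x hx y hy => ?_⟩
        · have := hmem u hu' y hy x hx 0 (by omega)
          rw [h0] at this
          omega
        · have := hmem u hu' y hy x hx i hiK
          rw [hg i hi] at this
          omega
      · exact hd u hu' t ht' hut i hi hiK

/-- For every sequence `ā` with `0 ≤ a i < 1` there is `f : ℕ → ℕ` such that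
for every sequence `p̄` obtained from `ā` by inserting more than `f i` zero terms after the
`i`-th term of `ā` (the `i`-th term of `ā` being placed at position `g i`, with `g 1 = 1`),
a zero-one law holds for every sentence of the language `L`. -/
theorem statement_2 (a : ℕ → ℝ) (ha : ∀ i, 0 ≤ a i ∧ a i < 1) :
    ∃ f : ℕ → ℕ, ∀ (g : ℕ → ℕ) (p : ℕ → ℝ),
      g 1 = 1 →
      (∀ i, 1 ≤ i → g i + f i + 1 < g (i + 1)) →
      (∀ i, 1 ≤ i → p (g i) = a i) →
      (∀ j, 1 ≤ j → (∀ i, 1 ≤ i → g i ≠ j) → p j = 0) →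
      ∀ ψ : Language.graph.Sentence,
        Tendsto (fun n => ProbL p n ψ) atTop (nhds 0) ∨
          Tendsto (fun n => ProbL p n ψ) atTop (nhds 1) := by
  classical
  let b : ℕ → ℝ := fun K => ∏ i ∈ Finset.Icc 1 K, (1 - a i)
  let N : ℕ → ℕ := fun K => K * ⌈(1 / b K) ^ K⌉₊
  refine ⟨fun i => N (i + 1) * (i + 2) * (i + 1) + (i + 1), ?_⟩
  intro g p hg1 hg hpa hp0 ψ
  have hb0 : ∀ K, 0 < b K := fun K => Finset.prod_pos fun i _ => by have := ha i; linarith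
  have hb1 : ∀ K, b K ≤ 1 := fun K => Finset.prod_le_one
    (fun i _ => by have := ha i; linarith) (fun i _ => by have := ha i; linarith)
  have hp : ∀ j, 1 ≤ j → 0 ≤ p j ∧ p j < 1 := by
    intro j hj
    by_cases h : ∃ i, 1 ≤ i ∧ g i = j
    · obtain ⟨i, hi, rfl⟩ := h
      rw [hpa i hi]; exact ha i
    · push Not at h
      rw [hp0 j hj h]; norm_num
  have hgm : ∀ i j, 1 ≤ i → i ≤ j → g i + (j - i) ≤ g j := by
    intro i j hi hij
    induction j, hij using Nat.le_induction with
    | base => simp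
    | succ j hj ih =>
      have := hg j (by omega)
      omega
  have hgmono : ∀ i j, 1 ≤ i → i < j → g i < g j := fun i j hi hij => by
    have := hgm i j hi hij.le; omega
  -- choice of the isolated graph
  obtain ⟨L, A, R, hA, hrep⟩ := exists_reps p (qr ψ)
  obtain ⟨D, hD⟩ := exists_bound hA
  have hU : ∀ x y, x < y → Rst D A R x y → p (y - x) ≠ 0 := by
    rintro x y hxy ⟨q, u, hu, v, hv, rfl, rfl, h⟩
    have := (hA q).2.2.2 u hu v hv (by omega) h
    rwa [Nat.add_sub_add_left]
  set M := L * D with hM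
  obtain ⟨c, hc0, hc1, hgood⟩ := good_lower hp M (Rst D A R) hU
  let Gd : (n : ℕ) → Sample n → Prop := fun n ω =>
    Supp p ω ∧ ∃ t, t + M ≤ n ∧ Iso ω M (Rst D A R) t
  have hBF : ∀ n n' (ω : Sample n) (ω' : Sample n'), Gd n ω → Gd n' ω' →
      (SatL ω ψ ↔ SatL ω' ψ) := fun n n' ω ω' h h' =>
    SatL_iff ω ω' ψ (BF_good hA hD hrep ω ω' h.1 h'.1 h.2 h'.2)
  have hmain : ∀ K, 2 * M * M + 2 * M + M + 2 ≤ K → ∀ n, g K ≤ n → n < g (K + 1) →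
      1 - Real.exp (-(c * K)) ≤ Pr p n (Gd n) := by
    intro K hK n hn hn'
    have hQ : ∏ j ∈ Finset.Icc 1 n, (1 - p j) = b K := by
      have h1 : ∏ j ∈ (Finset.Icc 1 K).image g, (1 - p j) = b K := by
        rw [Finset.prod_image]
        · exact Finset.prod_congr rfl fun i hi => by rw [hpa i (Finset.mem_Icc.1 hi).1]
        · intro i hi j hj h
          rw [Finset.coe_Icc, Set.mem_Icc] at hi hj
          rcases lt_trichotomy i j with h' | h' | h'
          · have := hgmono i j hi.1 h'; omega
          · exact h'
          · have := hgmono j i hj.1 h'; omega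
      rw [← h1]
      symm
      refine Finset.prod_subset ?_ ?_
      · intro j hj
        obtain ⟨i, hi, rfl⟩ := Finset.mem_image.1 hj
        rw [Finset.mem_Icc] at hi ⊢
        have h1 := hgm 1 i le_rfl hi.1
        have h2 := hgm i K hi.1 hi.2
        omega
      · intro j hj hj'
        rw [Finset.mem_Icc] at hj
        rw [hp0 j hj.1, sub_zero]
        intro i hi hij
        apply hj'
        refine Finset.mem_image.2 ⟨i, Finset.mem_Icc.2 ⟨hi, ?_⟩, hij⟩
        by_contra hc
        have := hgm (K + 1) i (by omega) (by omega)
        omega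
    have hnbig : N K * (K + 1) * K + K < n := by
      obtain ⟨K', rfl⟩ : ∃ K', K = K' + 1 := ⟨K - 1, by omega⟩
      have := hg K' (by omega)
      simp only at this
      have e : K' + 1 + 1 = K' + 2 := rfl
      rw [e]
      omega
    obtain ⟨T, hTc, hTn, hTd⟩ := exists_translates g K M n (N K) (by
      have h1 : 2 * M * M + 1 ≤ K := by omega
      calc N K * (M * M * (K + 1) * 2 + 1) + M ≤ N K * ((K + 1) * (2 * M * M + 1)) + M := by
            refine Nat.add_le_add_right (Nat.mul_le_mul_left _ ?_) _
            nlinarith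
        _ = N K * (K + 1) * (2 * M * M + 1) + M := by ring
        _ ≤ N K * (K + 1) * K + K := Nat.add_le_add (Nat.mul_le_mul_left _ h1) (by omega)
        _ ≤ n := hnbig.le)
    have h := hgood n T hTn (by
      intro s hs t ht hst e hpe h1 h2
      obtain ⟨i, hi, hgi⟩ : ∃ i, 1 ≤ i ∧ g i = e.1.2.val - e.1.1.val := by
        by_contra hcon
        push Not at hcon
        exact hpe (hp0 _ (edge_pos e) hcon)
      have hiK : i ≤ K := by
        by_contra hcon
        have := hgm (K + 1) i (by omega) (by omega)
        have := e.1.2.2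
        omega
      have hlt := e.2
      rw [Fin.lt_def] at hlt
      obtain ⟨q1, q2⟩ := hTd s hs t ht hst i hi hiK
      rcases h1 with h1 | h1 <;> rcases h2 with h2 | h2
      · exact (q1 (e.1.1.val - s) (by omega) (e.1.1.val - t) (by omega)).1 (by omega)
      · exact (q2 (e.1.1.val - s) (by omega) (e.1.2.val - t) (by omega)).1 (by omega)
      · exact (q2 (e.1.2.val - s) (by omega) (e.1.1.val - t) (by omega)).2 (by omega)
      · exact (q1 (e.1.2.val - s) (by omega) (e.1.2.val - t) (by omega)).1 (by omega))
    rw [hQ, hTc] at h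
    refine le_trans ?_ h
    have hx0 : 0 < b K ^ (2 * M) := pow_pos (hb0 K) _
    have hx1 : b K ^ (2 * M) ≤ 1 := pow_le_one₀ (hb0 K).le (hb1 K)
    have hNK : (K : ℝ) ≤ N K * b K ^ (2 * M) := by
      have h1 : (1 / b K) ^ K ≤ (⌈(1 / b K) ^ K⌉₊ : ℝ) := Nat.le_ceil _
      have h2 : b K ^ K ≤ b K ^ (2 * M) := pow_le_pow_of_le_one (hb0 K).le (hb1 K) (by omega)
      have h3 : 1 ≤ (⌈(1 / b K) ^ K⌉₊ : ℝ) * b K ^ (2 * M) := by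
        calc (1 : ℝ) = (1 / b K) ^ K * b K ^ K := by
              rw [← mul_pow, one_div, inv_mul_cancel₀ (hb0 K).ne', one_pow]
          _ ≤ _ := mul_le_mul h1 h2 (pow_nonneg (hb0 K).le _) (Nat.cast_nonneg _)
      simp only [N]
      push_cast
      have hK0 : (0 : ℝ) ≤ K := Nat.cast_nonneg _
      nlinarith
    have h4 : (1 - c * b K ^ (2 * M)) ^ N K ≤ Real.exp (-(c * K)) := by
      calc (1 - c * b K ^ (2 * M)) ^ N K ≤ Real.exp (-(c * b K ^ (2 * M))) ^ N K :=
            pow_le_pow_left₀ (by nlinarith) (Real.one_sub_le_exp_neg _) _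
        _ = Real.exp (-(c * (N K * b K ^ (2 * M)))) := by
            rw [← Real.exp_nat_mul]; congr 1; ring
        _ ≤ _ := Real.exp_le_exp.2 (neg_le_neg (mul_le_mul_of_nonneg_left hNK hc0.le))
    linarith
  have hlim : ∀ ε > 0, ∀ᶠ n in atTop, 1 - ε < Pr p n (Gd n) := by
    intro ε hε
    have ht : Tendsto (fun K : ℕ => Real.exp (-(c * K))) atTop (nhds 0) := by
      refine Real.tendsto_exp_neg_atTop_nhds_zero.comp ?_
      exact Tendsto.const_mul_atTop hc0 tendsto_natCast_atTop_atTop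
    obtain ⟨K0, hK0⟩ := eventually_atTop.1 (ht.eventually_lt_const hε)
    set K1 := max K0 (2 * M * M + 2 * M + M + 2) with hK1
    refine eventually_atTop.2 ⟨g K1, fun n hn => ?_⟩
    have hex : ∃ K, K1 ≤ K ∧ g K ≤ n ∧ n < g (K + 1) := by
      by_contra hcon
      push Not at hcon
      have hall : ∀ K, K1 ≤ K → g K ≤ n := by
        intro K hK
        induction K, hK using Nat.le_induction with
        | base => exact hn
        | succ K hK ih => exact hcon K hK ih
      have h1 := hall (K1 + n + 1) (by omega)
      have h2 := hgm K1 (K1 + n + 1) (by omega) (by omega)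
      omega
    obtain ⟨K, hK, h1, h2⟩ := hex
    have h3 := hmain K (by omega) n h1 h2
    have h4 := hK0 K (by omega)
    linarith
  have hnn : ∀ n (E : Sample n → Prop), 0 ≤ Pr p n E ∧ Pr p n E ≤ 1 := by
    intro n E
    rw [Pr_eq_PP]
    constructor
    · refine Finset.sum_nonneg fun ω _ => ?_
      split_ifs
      · exact Finset.prod_nonneg fun e _ => wt_nonneg hp n e _
      · exact le_rfl
    · rw [← PP_true (wt p n) (wt_sum p n)]
      exact PP_mono _ (wt_nonneg hp n) fun _ _ _ => trivial
  by_cases hsat : ∃ n0, ∃ ω0 : Sample n0, Gd n0 ω0 ∧ SatL ω0 ψ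
  · right
    obtain ⟨n0, ω0, hω0, hs0⟩ := hsat
    rw [tendsto_order]
    constructor
    · intro x hx
      filter_upwards [hlim (1 - x) (by linarith)] with n hn
      have : Pr p n (Gd n) ≤ ProbL p n ψ := by
        unfold ProbL
        rw [Pr_eq_PP, Pr_eq_PP]
        exact PP_mono _ (wt_nonneg hp n) fun ω _ h => (hBF _ _ _ _ h hω0).2 hs0
      linarith
    · intro x hx
      exact Eventually.of_forall fun n => lt_of_le_of_lt (hnn n _).2 hx
  · left
    push Not at hsat
    rw [tendsto_order]
    constructor
    · intro x hx
      exact Eventually.of_forall fun n => lt_of_lt_of_le hx (hnn n _).1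
    · intro x hx
      filter_upwards [hlim x hx] with n hn
      have h1 := PP_split (wt p n) (Gd n) (fun _ => True)
      rw [PP_true _ (wt_sum p n)] at h1
      simp only [and_true] at h1
      have : ProbL p n ψ ≤ PP (wt p n) (fun ω => ¬ Gd n ω) := by
        unfold ProbL
        rw [Pr_eq_PP]
        exact PP_mono _ (wt_nonneg hp n) fun ω _ h h' => hsat n ω h' h
      rw [Pr_eq_PP] at hn
      linarith

end RandomGraph
end
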